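/- arXiv:1506.07756 — 2 statements merged into one kernel-verified Lean document; each statement's English description precedes it below -/
import Mathlib

section
/- Let L be a QDS (Lindblad) generator on B(H) and let ρ be a full-rank density operator with L(ρ) = 0. Then ker(L) = ρ^{1/2}·ker(L†)·ρ^{1/2} = {ρ^{1/2} X ρ^{1/2} : X ∈ ker(L†)}. Moreover, there exists an orthogonal decomposition H = ⊕_ℓ (H_ℓ^{(A)} ⊗ H_ℓ^{(B)}) with respect to which ker(L†) = ⊕_ℓ B(H_ℓ^{(A)}) ⊗ I_ℓ^{(B)} and ρ = ⊕_ℓ p_ℓ · ρ_ℓ^{(A)} ⊗ τ_ℓ^{(B)}, where p_ℓ > 0 and ρ_ℓ^{(A)}, τ_ℓ^{(B)} are full-rank density operators on H_ℓ^{(A)} and H_ℓ^{(B)}, respectively. -/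
namespace QDS

open Matrix
open scoped ComplexOrder

/-! ### Basic single-system notions -/

section Single

variable {ι : Type*} [Fintype ι] [DecidableEq ι]

open Classical in
/-- The (unique) positive-semidefinite square root of a positive-semidefinite matrix
(junk value `0` if no positive-semidefinite square root exists). -/
noncomputable def msqrt (A : Matrix ι ι ℂ) : Matrix ι ι ℂ :=
  if h : ∃ B : Matrix ι ι ℂ, B.PosSemidef ∧ B * B = A then h.choose else 0

open Classical in
/-- The Moore–Penrose pseudoinverse of a matrix, defined via its characterizing
properties (it always exists and is unique for complex matrices). -/
noncomputable def mpinv (A : Matrix ι ι ℂ) : Matrix ι ι ℂ :=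
  if h : ∃ B : Matrix ι ι ℂ,
      A * B * A = A ∧ B * A * B = B ∧ (A * B)ᴴ = A * B ∧ (B * A)ᴴ = B * A
  then h.choose else 0

/-- A density operator: positive semidefinite with unit trace. -/
def IsDensity (ρ : Matrix ι ι ℂ) : Prop := ρ.PosSemidef ∧ ρ.trace = 1

/-- A CPTP map in Kraus (operator-sum) form. -/
def IsCPTP (T : Matrix ι ι ℂ →ₗ[ℂ] Matrix ι ι ℂ) : Prop :=
  ∃ (m : ℕ) (M : Fin m → Matrix ι ι ℂ),
    (∀ X, T X = ∑ k, M k * X * (M k)ᴴ) ∧ (∑ k, (M k)ᴴ * M k) = 1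

/-- The Lindblad (QDS) generator with Hamiltonian `Hm` and noise operators `Lk`:
`L(X) = -i[Hm, X] + Σₖ (Lₖ X Lₖ† - ½{Lₖ†Lₖ, X})`. -/
noncomputable def lindbladMap (Hm : Matrix ι ι ℂ) {m : ℕ} (Lk : Fin m → Matrix ι ι ℂ) :
    Matrix ι ι ℂ →ₗ[ℂ] Matrix ι ι ℂ :=
  (-Complex.I) • (LinearMap.mulLeft ℂ Hm - LinearMap.mulRight ℂ Hm) +
    ∑ k, ((LinearMap.mulRight ℂ (Lk k)ᴴ).comp (LinearMap.mulLeft ℂ (Lk k)) -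
      ((1 : ℂ)/2) • (LinearMap.mulLeft ℂ ((Lk k)ᴴ * Lk k) +
        LinearMap.mulRight ℂ ((Lk k)ᴴ * Lk k)))

/-- `L` is a QDS (Lindblad) generator. -/
def IsLindblad (L : Matrix ι ι ℂ →ₗ[ℂ] Matrix ι ι ℂ) : Prop :=
  ∃ Hm : Matrix ι ι ℂ, Hm.IsHermitian ∧
    ∃ (m : ℕ) (Lk : Fin m → Matrix ι ι ℂ), L = lindbladMap Hm Lk

/-- `Ld` is the Hilbert–Schmidt adjoint of `L` (w.r.t. `⟨X,Y⟩ = Tr(X†Y)`). -/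
def IsHSAdjoint (L Ld : Matrix ι ι ℂ →ₗ[ℂ] Matrix ι ι ℂ) : Prop :=
  ∀ X Y : Matrix ι ι ℂ, ((Ld X)ᴴ * Y).trace = (Xᴴ * L Y).trace

/-- The fixed-point set of a (super)operator. -/
def fixSet (T : Matrix ι ι ℂ →ₗ[ℂ] Matrix ι ι ℂ) : Set (Matrix ι ι ℂ) := {X | T X = X}

/-- The support of an operator: the orthogonal complement of its kernel,
equivalently the range of its adjoint. -/
noncomputable def msupp (A : Matrix ι ι ℂ) : Submodule ℂ (ι → ℂ) := LinearMap.range (Aᴴ).mulVecLin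

/-- The support of a set of operators: the span of the union of their supports. -/
noncomputable def suppSet (W : Set (Matrix ι ι ℂ)) : Submodule ℂ (ι → ℂ) := ⨆ O ∈ W, msupp O

/-- The minimal modular-invariant distorted algebra generated by `W` relative to `ρ`:
the smallest subspace containing `W` that is closed under the adjoint, under the
`ρ`-modified product `(X,Y) ↦ X ρ⁻ Y`, and under the modular map `X ↦ ρ^{1/2} X ρ⁻^{1/2}`. -/
noncomputable def Fdist (ρ : Matrix ι ι ℂ) (W : Set (Matrix ι ι ℂ)) :
    Submodule ℂ (Matrix ι ι ℂ) :=
  sInf {S : Submodule ℂ (Matrix ι ι ℂ) | W ⊆ S ∧ (∀ X ∈ S, Xᴴ ∈ S) ∧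
    (∀ X ∈ S, ∀ Y ∈ S, X * mpinv ρ * Y ∈ S) ∧
    (∀ X ∈ S, msqrt ρ * X * mpinv (msqrt ρ) ∈ S)}

/-- `ρ` is globally asymptotically stable for the generator `L`: it is invariant and every
solution of `ẋ = L(x)` starting at a density operator converges to `ρ` as `t → ∞`. -/
def IsGAS (L : Matrix ι ι ℂ →ₗ[ℂ] Matrix ι ι ℂ) (ρ : Matrix ι ι ℂ) : Prop :=
  L ρ = 0 ∧
  ∀ σ : Matrix ι ι ℂ, IsDensity σ →
    ∀ x : ℝ → Matrix ι ι ℂ, x 0 = σ →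
      (∀ t : ℝ, ∀ i j, HasDerivAt (fun s : ℝ => x s i j) (L (x t) i j) t) →
      ∀ i j, Filter.Tendsto (fun t : ℝ => x t i j) Filter.atTop (nhds (ρ i j))

end Single

/-! ### Bipartite notions -/

section Bipartite

variable {α β : Type*} [Fintype α] [Fintype β] [DecidableEq α] [DecidableEq β]

/-- Partial trace over the second factor. -/
noncomputable def ptraceB (ρ : Matrix (α × β) (α × β) ℂ) : Matrix α α ℂ :=
  Matrix.of fun i j => ∑ k : β, ρ (i, k) (j, k)

/-- The operator Schmidt span of `ρ` on the first factor:
`{Tr_B[(I ⊗ B) ρ] : B ∈ B(H_B)}`. -/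
noncomputable def opSchmidtA (ρ : Matrix (α × β) (α × β) ℂ) : Set (Matrix α α ℂ) :=
  {A | ∃ B : Matrix β β ℂ,
    A = ptraceB ((Matrix.kroneckerMap (· * ·) (1 : Matrix α α ℂ) B) * ρ)}

/-- The (vector) Schmidt span of `v ∈ V_A ⊗ V_B` relative to `V_A`: the image of `v`
under partial inner products with vectors of `V_B`. -/
def vSchmidtA (v : α × β → ℂ) : Set (α → ℂ) :=
  {w | ∃ b : β → ℂ, w = fun a => ∑ j, (starRingEnd ℂ) (b j) * v (a, j)}

/-- `Σ_A(v) ⊗ V_B` as a subspace of `V_A ⊗ V_B`. -/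
noncomputable def extVSchmidtA (v : α × β → ℂ) : Submodule ℂ (α × β → ℂ) :=
  Submodule.span ℂ {v' | ∃ w ∈ vSchmidtA v, ∃ b : β → ℂ, v' = fun p => w p.1 * b p.2}

end Bipartite

/-! ### Multipartite notions -/

section Multipartite

variable {n : ℕ} {d : Fin n → Type*} [∀ a, Fintype (d a)] [∀ a, DecidableEq (d a)]

/-- Index type of the neighborhood factor `H_N`. -/
abbrev nbhdIdx (d : Fin n → Type*) (N : Finset (Fin n)) : Type _ :=
  ∀ a : {x : Fin n // x ∈ N}, d a

/-- Index type of the complementary factor `H_N̄`. -/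
abbrev nbhdCoIdx (d : Fin n → Type*) (N : Finset (Fin n)) : Type _ :=
  ∀ a : {x : Fin n // ¬ x ∈ N}, d a

/-- The factorization `H ≃ H_N ⊗ H_N̄` at the level of index types. -/
def splitEquiv (d : Fin n → Type*) (N : Finset (Fin n)) :
    (∀ a, d a) ≃ nbhdIdx d N × nbhdCoIdx d N :=
  Equiv.piEquivPiSubtypeProd (fun x => x ∈ N) d

variable (d)

/-- The operator `A ⊗ B` on `H = H_N ⊗ H_N̄`, viewed as an operator on `H`. -/
noncomputable def splitLift (N : Finset (Fin n))
    (A : Matrix (nbhdIdx d N) (nbhdIdx d N) ℂ)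
    (B : Matrix (nbhdCoIdx d N) (nbhdCoIdx d N) ℂ) :
    Matrix (∀ a, d a) (∀ a, d a) ℂ :=
  (Matrix.kroneckerMap (· * ·) A B).submatrix (splitEquiv d N) (splitEquiv d N)

/-- The neighborhood operator `A ⊗ I_N̄` on `H`. -/
noncomputable def nbhdLift (N : Finset (Fin n))
    (A : Matrix (nbhdIdx d N) (nbhdIdx d N) ℂ) : Matrix (∀ a, d a) (∀ a, d a) ℂ :=
  splitLift d N A 1

/-- The operator `I_N ⊗ B` on `H`. -/
noncomputable def coLift (N : Finset (Fin n))
    (B : Matrix (nbhdCoIdx d N) (nbhdCoIdx d N) ℂ) : Matrix (∀ a, d a) (∀ a, d a) ℂ :=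
  splitLift d N 1 B

/-- The reduced state `ρ_N = Tr_N̄(ρ)` on the neighborhood `N`. -/
noncomputable def nbhdPtrace (N : Finset (Fin n)) (ρ : Matrix (∀ a, d a) (∀ a, d a) ℂ) :
    Matrix (nbhdIdx d N) (nbhdIdx d N) ℂ :=
  Matrix.of fun i j => ∑ k : nbhdCoIdx d N,
    ρ ((splitEquiv d N).symm (i, k)) ((splitEquiv d N).symm (j, k))

/-- The operator Schmidt span of `ρ` on the neighborhood `N`:
`Σ_N(ρ) = {Tr_N̄[(I_N ⊗ B) ρ] : B}`. -/
noncomputable def nbhdSchmidt (N : Finset (Fin n)) (ρ : Matrix (∀ a, d a) (∀ a, d a) ℂ) :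
    Set (Matrix (nbhdIdx d N) (nbhdIdx d N) ℂ) :=
  {A | ∃ B : Matrix (nbhdCoIdx d N) (nbhdCoIdx d N) ℂ,
    A = nbhdPtrace d N (coLift d N B * ρ)}

/-- The extended minimal modular-invariant distorted algebra
`F_{ρ_N}(Σ_N(ρ)) ⊗ B(H_N̄)` as a subspace of `B(H)`. -/
noncomputable def extF (N : Finset (Fin n)) (ρ : Matrix (∀ a, d a) (∀ a, d a) ℂ) :
    Submodule ℂ (Matrix (∀ a, d a) (∀ a, d a) ℂ) :=
  Submodule.span ℂ {X | ∃ A ∈ Fdist (nbhdPtrace d N ρ) (nbhdSchmidt d N ρ),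
    ∃ B : Matrix (nbhdCoIdx d N) (nbhdCoIdx d N) ℂ, X = splitLift d N A B}

/-- A neighborhood QDS generator for `N`: a Lindblad generator whose Hamiltonian and
noise operators all act as `X_N ⊗ I_N̄`. -/
def IsNbhdGen (N : Finset (Fin n))
    (L : Matrix (∀ a, d a) (∀ a, d a) ℂ →ₗ[ℂ] Matrix (∀ a, d a) (∀ a, d a) ℂ) : Prop :=
  ∃ HN : Matrix (nbhdIdx d N) (nbhdIdx d N) ℂ, HN.IsHermitian ∧
    ∃ (m : ℕ) (Lk : Fin m → Matrix (nbhdIdx d N) (nbhdIdx d N) ℂ),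
      L = lindbladMap (nbhdLift d N HN) fun k => nbhdLift d N (Lk k)

/-- A purely dissipative neighborhood generator for `N` (zero Hamiltonian in some
Lindblad representation). -/
def IsDissipNbhdGen (N : Finset (Fin n))
    (L : Matrix (∀ a, d a) (∀ a, d a) ℂ →ₗ[ℂ] Matrix (∀ a, d a) (∀ a, d a) ℂ) : Prop :=
  ∃ (m : ℕ) (Lk : Fin m → Matrix (nbhdIdx d N) (nbhdIdx d N) ℂ),
    L = lindbladMap 0 fun k => nbhdLift d N (Lk k)

/-- The family of neighborhood generators `Lj` is frustration free: every invariant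
state of the sum is invariant for each component. -/
def IsFFFamily {M : ℕ}
    (Lj : Fin M → (Matrix (∀ a, d a) (∀ a, d a) ℂ →ₗ[ℂ] Matrix (∀ a, d a) (∀ a, d a) ℂ)) :
    Prop :=
  ∀ ρ : Matrix (∀ a, d a) (∀ a, d a) ℂ, IsDensity ρ → (∑ j, Lj j) ρ = 0 → ∀ j, Lj j ρ = 0

/-- `ρ` is frustration-free quasi-locally stabilizable relative to the neighborhood
structure `Nb`. -/
def IsFFQLS {M : ℕ} (Nb : Fin M → Finset (Fin n))
    (ρ : Matrix (∀ a, d a) (∀ a, d a) ℂ) : Prop :=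
  ∃ Lj : Fin M → (Matrix (∀ a, d a) (∀ a, d a) ℂ →ₗ[ℂ] Matrix (∀ a, d a) (∀ a, d a) ℂ),
    (∀ j, IsNbhdGen d (Nb j) (Lj j)) ∧ IsFFFamily d Lj ∧ IsGAS (∑ j, Lj j) ρ

/-- A pure state `|ψ⟩⟨ψ|` is dissipatively quasi-locally stabilizable relative to `Nb`:
it is GAS for a QL generator whose components have zero Hamiltonian and neighborhood
noise operators annihilating `ψ`. -/
def IsDQLS {M : ℕ} (Nb : Fin M → Finset (Fin n)) (ψ : (∀ a, d a) → ℂ) : Prop :=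
  ∃ Lj : Fin M → (Matrix (∀ a, d a) (∀ a, d a) ℂ →ₗ[ℂ] Matrix (∀ a, d a) (∀ a, d a) ℂ),
    (∀ j, ∃ (m : ℕ) (Dk : Fin m → Matrix (nbhdIdx d (Nb j)) (nbhdIdx d (Nb j)) ℂ),
      Lj j = lindbladMap 0 (fun k => nbhdLift d (Nb j) (Dk k)) ∧
      ∀ k, (nbhdLift d (Nb j) (Dk k)).mulVec ψ = 0) ∧
    IsGAS (∑ j, Lj j) (Matrix.vecMulVec ψ (star ψ))

/-- The (vector) Schmidt span of `ψ` relative to the neighborhood factor `H_N`. -/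
def vecSchmidt (N : Finset (Fin n)) (ψ : (∀ a, d a) → ℂ) : Set (nbhdIdx d N → ℂ) :=
  {w | ∃ b : nbhdCoIdx d N → ℂ,
    w = fun i => ∑ k, (starRingEnd ℂ) (b k) * ψ ((splitEquiv d N).symm (i, k))}

/-- `Σ_N(ψ) ⊗ H_N̄` as a subspace of `H`. -/
noncomputable def extVecSchmidt (N : Finset (Fin n)) (ψ : (∀ a, d a) → ℂ) :
    Submodule ℂ ((∀ a, d a) → ℂ) :=
  Submodule.span ℂ {v | ∃ w ∈ vecSchmidt d N ψ, ∃ b : nbhdCoIdx d N → ℂ,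
    v = fun x => w ((splitEquiv d N) x).1 * b ((splitEquiv d N) x).2}

end Multipartite

/-!
Tracing the dissipation identity
`L†(X†X) = L†(X†)X + X†L†(X) + ∑ₖ [Lₖ, X]†[Lₖ, X]` against the invariant full-rank `ρ` shows that
every `X ∈ ker L†` commutes with all `Lₖ`, hence that `ker L†` is the commutant `A` of `H`, `Lₖ`,
`Lₖ†`. Multiplication by `A` commutes with `L`, so `Aρ ⊆ ker L` and `ρA ⊆ ker L`; as `ker L` and
`ker L†` have the same dimension, `ker L = Aρ ⊇ ρA`. Splitting `1` into minimal projections of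
the star algebra `A` and grouping them by equivalence gives `A = ⊕ₗ B(H_A) ⊗ 1`. In these
coordinates `ρ(Z ⊗ 1) = (Z' ⊗ 1)ρ`, and with `a = Tr_B ρ` this forces `Z' = aZa⁻¹`, so
`(a⁻¹ ⊗ 1)ρ` lies in the commutant `⊕ₗ 1 ⊗ B(H_B)` and `ρ = ⊕ₗ a ⊗ c`. The square root therefore
also splits, and `√ρ A √ρ = Aρ = ker L`.
-/

section PositiveMatrices

variable {n : Type*} [Fintype n]

theorem pos_of_mul_conjTranspose_self_eq_smul {p y : Matrix n n ℂ} {c : ℂ}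
    (hp : IsStarProjection p) (hy : y ≠ 0) (h : y * yᴴ = c • p) : 0 < c := by
  have hpos : 0 < (y * yᴴ).trace :=
    (posSemidef_self_mul_conjTranspose y).trace_nonneg.lt_of_ne'
      (mt trace_mul_conjTranspose_self_eq_zero_iff.mp hy)
  have hp0 : 0 ≤ p.trace := by
    have hpp : pᴴ * p = p := by
      rw [show pᴴ = p from hp.isSelfAdjoint, hp.isIdempotentElem.eq]
    exact hpp ▸ (posSemidef_conjTranspose_mul_self p).trace_nonneg
  rw [h, trace_smul, smul_eq_mul] at hpos
  have hp0' : 0 < p.trace := hp0.lt_of_ne' (right_ne_zero_of_mul hpos.ne')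
  simpa [hp0'.ne'] using mul_pos hpos (inv_pos.mpr hp0')

theorem msqrt_posSemidef (A : Matrix n n ℂ) : (msqrt A).PosSemidef := by
  unfold msqrt
  split_ifs with h
  · exact h.choose_spec.1
  · exact .zero

theorem exists_posSemidef_mul_self {A : Matrix n n ℂ} (hA : A.PosSemidef) :
    ∃ B : Matrix n n ℂ, B.PosSemidef ∧ B * B = A := by
  classical
  open scoped MatrixOrder in
  exact ⟨CFC.sqrt A, (CFC.sqrt_nonneg A).posSemidef, CFC.sqrt_mul_sqrt_self A hA.nonneg⟩

theorem msqrt_mul_self {A : Matrix n n ℂ} (hA : A.PosSemidef) : msqrt A * msqrt A = A := by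
  have h := exists_posSemidef_mul_self hA
  rw [msqrt, dif_pos h]
  exact h.choose_spec.2

theorem msqrt_eq_of_mul_self {A B : Matrix n n ℂ} (hB : B.PosSemidef) (h : B * B = A) :
    msqrt A = B := by
  classical
  open scoped MatrixOrder in
  have hA : msqrt A * msqrt A = A :=
    msqrt_mul_self (h ▸ by simpa [hB.isHermitian.eq] using posSemidef_self_mul_conjTranspose B)
  exact (CFC.sqrt_unique hA (msqrt_posSemidef A).nonneg).symm.trans
    (CFC.sqrt_unique h hB.nonneg)

theorem msqrt_isUnit [DecidableEq n] {A : Matrix n n ℂ} (hA : A.PosDef) : IsUnit (msqrt A) :=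
  isUnit_of_mul_isUnit_left ((msqrt_mul_self hA.posSemidef).symm ▸ hA.isUnit)

theorem eq_zero_of_trace_mul_mul_conjTranspose_eq_zero {ρ C : Matrix n n ℂ} (hρ : ρ.PosDef)
    (h : (C * ρ * Cᴴ).trace = 0) : C = 0 := by
  classical
  have hC : C * ρ * Cᴴ = 0 :=
    ((hρ.posSemidef.mul_mul_conjTranspose_same C).trace_eq_zero_iff).mp h
  have hS : (C * msqrt ρ) * (C * msqrt ρ)ᴴ = 0 := by
    rwa [conjTranspose_mul, (msqrt_posSemidef ρ).isHermitian.eq, Matrix.mul_assoc,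
      ← Matrix.mul_assoc (msqrt ρ), msqrt_mul_self hρ.posSemidef, ← Matrix.mul_assoc]
  exact (msqrt_isUnit hρ).mul_left_eq_zero.mp (self_mul_conjTranspose_eq_zero.mp hS)

end PositiveMatrices

section Adjoint

theorem finrank_ker_eq_of_isAdjointPair {K V : Type*} [Field K] [AddCommGroup V] [Module K V]
    [FiniteDimensional K V] {B : LinearMap.BilinForm K V} (hB : B.Nondegenerate)
    (hrefl : B.IsRefl) {f g : V →ₗ[K] V} (h : LinearMap.IsAdjointPair B B f g) :
    Module.finrank K (LinearMap.ker f) = Module.finrank K (LinearMap.ker g) := by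
  have hker : LinearMap.ker f = B.orthogonal (LinearMap.range g) := by
    ext x
    rw [LinearMap.mem_ker, LinearMap.BilinForm.mem_orthogonal_iff]
    constructor
    · rintro hx _ ⟨y, rfl⟩
      exact hrefl _ _ (by rw [← h x y, hx, map_zero, LinearMap.zero_apply])
    · intro hx
      exact hB.1 _ fun y => (h x y).trans (hrefl _ _ (hx _ ⟨y, rfl⟩))
  have := g.finrank_range_add_finrank_ker
  rw [hker, LinearMap.BilinForm.finrank_orthogonal hB]
  lia

variable {n : Type*} [Fintype n]

/-- The trace pairing `(A, B) ↦ Tr (A B)`. Bilinearity, as opposed to the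
Hilbert–Schmidt product, lets the general theory of adjoint pairs of linear maps apply. -/
noncomputable def traceForm : LinearMap.BilinForm ℂ (Matrix n n ℂ) :=
  (LinearMap.mul ℂ (Matrix n n ℂ)).compr₂ (traceLinearMap n ℂ ℂ)

theorem traceForm_apply (A B : Matrix n n ℂ) : traceForm A B = (A * B).trace := rfl

theorem traceForm_isRefl : (traceForm (n := n)).IsRefl := fun A B h => by
  rwa [traceForm_apply, trace_mul_comm]

theorem traceForm_nondegenerate : (traceForm (n := n)).Nondegenerate := by
  classical
  constructor
  · exact fun A h => ext_iff_trace_mul_right.mpr fun B => by simpa [traceForm_apply] using h B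
  · exact fun A h => ext_iff_trace_mul_left.mpr fun B => by simpa [traceForm_apply] using h B

end Adjoint

section Lindblad

variable {n : Type*} [Fintype n] {m : ℕ}

/-- The Heisenberg-picture generator
`X ↦ i[Hm, X] + Σₖ (Lₖ† X Lₖ - ½{Lₖ†Lₖ, X})`, adjoint to `lindbladMap Hm Lk`. -/
noncomputable def heisenbergMap (Hm : Matrix n n ℂ) (Lk : Fin m → Matrix n n ℂ)
    (X : Matrix n n ℂ) : Matrix n n ℂ :=
  Complex.I • (Hm * X - X * Hm) +
    ∑ k, ((Lk k)ᴴ * X * Lk k - (1 / 2 : ℂ) • ((Lk k)ᴴ * Lk k * X + X * ((Lk k)ᴴ * Lk k)))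

theorem heisenbergMap_conjTranspose {Hm : Matrix n n ℂ} (hHm : Hm.IsHermitian)
    (Lk : Fin m → Matrix n n ℂ) (X : Matrix n n ℂ) :
    heisenbergMap Hm Lk Xᴴ = (heisenbergMap Hm Lk X)ᴴ := by
  simp only [heisenbergMap, conjTranspose_add, conjTranspose_sub, conjTranspose_sum,
    conjTranspose_smul, conjTranspose_mul, conjTranspose_conjTranspose, hHm.eq, Complex.star_def,
    Complex.conj_I, map_div₀, map_one, map_ofNat, Matrix.mul_assoc]
  congr 1
  · rw [neg_smul, ← smul_neg, neg_sub]
  · simp only [add_comm]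

theorem heisenbergMap_conjTranspose_mul_self (Hm : Matrix n n ℂ) (Lk : Fin m → Matrix n n ℂ)
    (X : Matrix n n ℂ) :
    heisenbergMap Hm Lk (Xᴴ * X) =
      heisenbergMap Hm Lk Xᴴ * X + Xᴴ * heisenbergMap Hm Lk X + ∑ k, ⁅Lk k, X⁆ᴴ * ⁅Lk k, X⁆ := by
  have dissip (k : Fin m) : (Lk k)ᴴ * (Xᴴ * X) * Lk k
      - (1 / 2 : ℂ) • ((Lk k)ᴴ * Lk k * (Xᴴ * X) + Xᴴ * X * ((Lk k)ᴴ * Lk k)) =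
      ((Lk k)ᴴ * Xᴴ * Lk k
        - (1 / 2 : ℂ) • ((Lk k)ᴴ * Lk k * Xᴴ + Xᴴ * ((Lk k)ᴴ * Lk k))) * X
      + Xᴴ * ((Lk k)ᴴ * X * Lk k
        - (1 / 2 : ℂ) • ((Lk k)ᴴ * Lk k * X + X * ((Lk k)ᴴ * Lk k)))
      + ⁅Lk k, X⁆ᴴ * ⁅Lk k, X⁆ := by
    simp only [Ring.lie_def, conjTranspose_sub, conjTranspose_mul]
    noncomm_ring
    module
  have derivation : Complex.I • (Hm * (Xᴴ * X) - Xᴴ * X * Hm) =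
      Complex.I • (Hm * Xᴴ - Xᴴ * Hm) * X + Xᴴ * Complex.I • (Hm * X - X * Hm) := by
    simp only [smul_mul_assoc, mul_smul_comm, ← smul_add]
    congr 1
    noncomm_ring
  simp only [heisenbergMap, dissip, derivation, Finset.sum_add_distrib, Matrix.add_mul,
    Matrix.mul_add, Matrix.sum_mul, Matrix.mul_sum]
  abel

theorem heisenbergMap_eq_of_commute (Hm : Matrix n n ℂ) {Lk : Fin m → Matrix n n ℂ}
    {X : Matrix n n ℂ} (hX : ∀ k, Commute (Lk k) X) (hX' : ∀ k, Commute (Lk k)ᴴ X) :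
    heisenbergMap Hm Lk X = Complex.I • (Hm * X - X * Hm) := by
  have hdissip (k : Fin m) : (Lk k)ᴴ * X * Lk k
      - (1 / 2 : ℂ) • ((Lk k)ᴴ * Lk k * X + X * ((Lk k)ᴴ * Lk k)) = 0 := by
    rw [((hX' k).mul_left (hX k)).eq, (hX' k).eq, Matrix.mul_assoc]
    module
  simp only [heisenbergMap, hdissip, Finset.sum_const_zero, add_zero]

variable [DecidableEq n]

theorem lindbladMap_apply (Hm : Matrix n n ℂ) (Lk : Fin m → Matrix n n ℂ) (X : Matrix n n ℂ) :
    lindbladMap Hm Lk X = -Complex.I • (Hm * X - X * Hm) +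
      ∑ k, (Lk k * X * (Lk k)ᴴ
        - (1 / 2 : ℂ) • ((Lk k)ᴴ * Lk k * X + X * ((Lk k)ᴴ * Lk k))) := by
  simp [lindbladMap, LinearMap.sum_apply, Matrix.mul_assoc]

theorem trace_heisenbergMap_mul (Hm : Matrix n n ℂ) (Lk : Fin m → Matrix n n ℂ)
    (X Y : Matrix n n ℂ) :
    (heisenbergMap Hm Lk X * Y).trace = (X * lindbladMap Hm Lk Y).trace := by
  have cyc (A B C : Matrix n n ℂ) : (A * B * C).trace = (B * (C * A)).trace := by
    rw [Matrix.mul_assoc, trace_mul_comm, Matrix.mul_assoc]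
  simp only [heisenbergMap, lindbladMap_apply, Matrix.add_mul, Matrix.mul_add, Matrix.sum_mul,
    Matrix.mul_sum, Matrix.sub_mul, Matrix.mul_sub, smul_mul_assoc, mul_smul_comm, trace_add,
    trace_sub, trace_sum, trace_smul, smul_eq_mul]
  congr 1
  · rw [cyc Hm, Matrix.mul_assoc X]; ring
  · refine Finset.sum_congr rfl fun k _ => ?_
    rw [Matrix.mul_assoc _ X, cyc _ _ Y, cyc _ X Y]
    simp only [Matrix.mul_assoc]
    ring

theorem IsHSAdjoint.apply_eq_heisenbergMap {Hm : Matrix n n ℂ} (hHm : Hm.IsHermitian)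
    {Lk : Fin m → Matrix n n ℂ} {Ld : Matrix n n ℂ →ₗ[ℂ] Matrix n n ℂ}
    (hLd : IsHSAdjoint (lindbladMap Hm Lk) Ld) (X : Matrix n n ℂ) :
    Ld X = heisenbergMap Hm Lk X := by
  rw [← conjTranspose_inj, ← heisenbergMap_conjTranspose hHm, ext_iff_trace_mul_right]
  intro Y
  rw [hLd, trace_heisenbergMap_mul]

theorem IsHSAdjoint.finrank_ker_eq {Hm : Matrix n n ℂ} (hHm : Hm.IsHermitian)
    {Lk : Fin m → Matrix n n ℂ} {Ld : Matrix n n ℂ →ₗ[ℂ] Matrix n n ℂ}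
    (hLd : IsHSAdjoint (lindbladMap Hm Lk) Ld) :
    Module.finrank ℂ (LinearMap.ker Ld) =
      Module.finrank ℂ (LinearMap.ker (lindbladMap Hm Lk)) :=
  finrank_ker_eq_of_isAdjointPair traceForm_nondegenerate traceForm_isRefl fun X Y => by
    rw [traceForm_apply, traceForm_apply, hLd.apply_eq_heisenbergMap hHm, trace_heisenbergMap_mul]

/-- The operators commuting with the Hamiltonian, the noise operators and their adjoints. -/
noncomputable def commutant (Hm : Matrix n n ℂ) (Lk : Fin m → Matrix n n ℂ) :
    StarSubalgebra ℂ (Matrix n n ℂ) :=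
  StarSubalgebra.centralizer ℂ (insert Hm (Set.range Lk))

theorem mem_commutant_iff {Hm : Matrix n n ℂ} (hHm : Hm.IsHermitian)
    {Lk : Fin m → Matrix n n ℂ} {X : Matrix n n ℂ} :
    X ∈ commutant Hm Lk ↔ Commute Hm X ∧ ∀ k, Commute (Lk k) X ∧ Commute (Lk k)ᴴ X := by
  simp [commutant, StarSubalgebra.mem_centralizer_iff, star_eq_conjTranspose, hHm.eq, Commute,
    SemiconjBy]

theorem commute_of_heisenbergMap_eq_zero {Hm : Matrix n n ℂ} (hHm : Hm.IsHermitian)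
    {Lk : Fin m → Matrix n n ℂ} {ρ : Matrix n n ℂ} (hρ : ρ.PosDef)
    (hρfix : lindbladMap Hm Lk ρ = 0) {X : Matrix n n ℂ} (hX : heisenbergMap Hm Lk X = 0)
    (k : Fin m) : Commute (Lk k) X := by
  have hX' : heisenbergMap Hm Lk Xᴴ = 0 := by
    rw [heisenbergMap_conjTranspose hHm, hX, conjTranspose_zero]
  have hsum : ∑ k, (⁅Lk k, X⁆ * ρ * ⁅Lk k, X⁆ᴴ).trace = 0 := by
    have h := trace_heisenbergMap_mul Hm Lk (Xᴴ * X) ρ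
    rw [hρfix, Matrix.mul_zero, trace_zero, heisenbergMap_conjTranspose_mul_self, hX, hX',
      Matrix.zero_mul, Matrix.mul_zero, zero_add, zero_add, Matrix.sum_mul, trace_sum] at h
    simpa only [Matrix.mul_assoc, trace_mul_comm _ᴴ] using h
  have hterm := (Finset.sum_eq_zero_iff_of_nonneg fun j _ =>
    (hρ.posSemidef.mul_mul_conjTranspose_same ⁅Lk j, X⁆).trace_nonneg).mp hsum k (Finset.mem_univ k)
  exact commute_iff_lie_eq.mpr (eq_zero_of_trace_mul_mul_conjTranspose_eq_zero hρ hterm)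

theorem heisenbergMap_eq_zero_iff {Hm : Matrix n n ℂ} (hHm : Hm.IsHermitian)
    {Lk : Fin m → Matrix n n ℂ} {ρ : Matrix n n ℂ} (hρ : ρ.PosDef)
    (hρfix : lindbladMap Hm Lk ρ = 0) {X : Matrix n n ℂ} :
    heisenbergMap Hm Lk X = 0 ↔ X ∈ commutant Hm Lk := by
  rw [mem_commutant_iff hHm]
  constructor
  · intro hX
    have hX' : heisenbergMap Hm Lk Xᴴ = 0 := by
      rw [heisenbergMap_conjTranspose hHm, hX, conjTranspose_zero]
    have hLX := commute_of_heisenbergMap_eq_zero hHm hρ hρfix hX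
    have hLX' (k : Fin m) : Commute (Lk k)ᴴ X := by
      simpa [star_eq_conjTranspose] using
        (commute_of_heisenbergMap_eq_zero hHm hρ hρfix hX' k).star_star
    rw [heisenbergMap_eq_of_commute Hm hLX hLX', smul_eq_zero, sub_eq_zero] at hX
    exact ⟨hX.resolve_left Complex.I_ne_zero, fun k => ⟨hLX k, hLX' k⟩⟩
  · rintro ⟨hHX, hLX⟩
    rw [heisenbergMap_eq_of_commute Hm (fun k => (hLX k).1) fun k => (hLX k).2, hHX.eq, sub_self,
      smul_zero]

theorem lindbladMap_mul_left {Hm : Matrix n n ℂ} (hHm : Hm.IsHermitian)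
    {Lk : Fin m → Matrix n n ℂ} {X : Matrix n n ℂ} (hX : X ∈ commutant Hm Lk)
    (Y : Matrix n n ℂ) : lindbladMap Hm Lk (X * Y) = X * lindbladMap Hm Lk Y := by
  obtain ⟨hHX, hLX⟩ := (mem_commutant_iff hHm).mp hX
  have pull {A : Matrix n n ℂ} (hA : Commute A X) (B : Matrix n n ℂ) : A * (X * B) = X * (A * B) :=
    hA.left_comm B
  simp only [lindbladMap_apply, Matrix.mul_add, Matrix.mul_sub, Matrix.mul_sum, mul_smul_comm,
    Matrix.mul_assoc, pull hHX, pull (hLX _).1, pull (hLX _).2]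

theorem lindbladMap_mul_right {Hm : Matrix n n ℂ} (hHm : Hm.IsHermitian)
    {Lk : Fin m → Matrix n n ℂ} {X : Matrix n n ℂ} (hX : X ∈ commutant Hm Lk)
    (Y : Matrix n n ℂ) : lindbladMap Hm Lk (Y * X) = lindbladMap Hm Lk Y * X := by
  obtain ⟨hHX, hLX⟩ := (mem_commutant_iff hHm).mp hX
  have push {A : Matrix n n ℂ} (hA : Commute A X) (B : Matrix n n ℂ) : B * X * A = B * A * X :=
    (hA.symm.right_comm B)
  simp only [lindbladMap_apply, Matrix.add_mul, Matrix.sub_mul, Matrix.sum_mul, smul_mul_assoc,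
    ← Matrix.mul_assoc, push hHX, push (hLX _).1, push (hLX _).2]

theorem IsHSAdjoint.ker_eq_commutant {Hm : Matrix n n ℂ} (hHm : Hm.IsHermitian)
    {Lk : Fin m → Matrix n n ℂ} {Ld : Matrix n n ℂ →ₗ[ℂ] Matrix n n ℂ}
    (hLd : IsHSAdjoint (lindbladMap Hm Lk) Ld) {ρ : Matrix n n ℂ} (hρ : ρ.PosDef)
    (hρfix : lindbladMap Hm Lk ρ = 0) :
    (LinearMap.ker Ld : Set (Matrix n n ℂ)) = commutant Hm Lk := by
  ext X
  rw [SetLike.mem_coe, LinearMap.mem_ker, hLd.apply_eq_heisenbergMap hHm,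
    heisenbergMap_eq_zero_iff hHm hρ hρfix, SetLike.mem_coe]

theorem ker_lindbladMap_eq_image_mul_right {Hm : Matrix n n ℂ} (hHm : Hm.IsHermitian)
    {Lk : Fin m → Matrix n n ℂ} {Ld : Matrix n n ℂ →ₗ[ℂ] Matrix n n ℂ}
    (hLd : IsHSAdjoint (lindbladMap Hm Lk) Ld) {ρ : Matrix n n ℂ} (hρ : ρ.PosDef)
    (hρfix : lindbladMap Hm Lk ρ = 0) :
    (LinearMap.ker (lindbladMap Hm Lk) : Set (Matrix n n ℂ)) =
      (· * ρ) '' (commutant Hm Lk : Set (Matrix n n ℂ)) := by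
  have hker := hLd.ker_eq_commutant hHm hρ hρfix
  have hle : (LinearMap.ker Ld).map (LinearMap.mulRight ℂ ρ) ≤
      LinearMap.ker (lindbladMap Hm Lk) := by
    rintro _ ⟨X, hX, rfl⟩
    rw [hker] at hX
    simp [lindbladMap_mul_left hHm hX, hρfix]
  have hinj : Function.Injective (LinearMap.mulRight ℂ ρ) := hρ.isUnit.mul_left_injective
  have heq := Submodule.eq_of_le_of_finrank_eq hle
    ((Submodule.equivMapOfInjective _ hinj _).finrank_eq.symm.trans (hLd.finrank_ker_eq hHm))
  rw [← heq, Submodule.map_coe, hker]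
  rfl

theorem exists_starSubalgebra_ker_eq {L Ld : Matrix n n ℂ →ₗ[ℂ] Matrix n n ℂ} (hL : IsLindblad L)
    (hLd : IsHSAdjoint L Ld) {ρ : Matrix n n ℂ} (hρ : ρ.PosDef) (hρfix : L ρ = 0) :
    ∃ A : StarSubalgebra ℂ (Matrix n n ℂ), (LinearMap.ker Ld : Set (Matrix n n ℂ)) = A ∧
      (LinearMap.ker L : Set (Matrix n n ℂ)) = (· * ρ) '' (A : Set (Matrix n n ℂ)) ∧
      ∀ X ∈ A, ∃ X' ∈ A, X' * ρ = ρ * X := by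
  obtain ⟨Hm, hHm, m, Lk, rfl⟩ := hL
  have hker := ker_lindbladMap_eq_image_mul_right hHm hLd hρ hρfix
  refine ⟨commutant Hm Lk, hLd.ker_eq_commutant hHm hρ hρfix, hker, fun X hX => ?_⟩
  have hρX : ρ * X ∈ (LinearMap.ker (lindbladMap Hm Lk) : Set (Matrix n n ℂ)) := by
    simp [lindbladMap_mul_right hHm hX, hρfix]
  rwa [hker] at hρX

end Lindblad

section BlockPartialTrace

theorem ptraceB_posDef {a b : Type*} [Fintype b] [Nonempty b] {M : Matrix (a × b) (a × b) ℂ}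
    (hM : M.PosDef) : (ptraceB M).PosDef := by
  have h : ptraceB M = ∑ x, M.submatrix (fun i => (i, x)) (fun i => (i, x)) := by
    ext i j
    simp [ptraceB, Matrix.sum_apply]
  rw [h]
  exact posDef_sum Finset.univ_nonempty fun x _ => hM.submatrix fun i j h => (Prod.ext_iff.mp h).1

variable {κ : Type*} {α β : κ → Type*} [∀ l, Fintype (β l)]

/-- The partial trace `Tr_B` of the `l`-th diagonal block of a matrix on
`⊕ₗ (ℂ^{α l} ⊗ ℂ^{β l})`. -/
noncomputable def blockPartialTrace (M : Matrix (Σ l, α l × β l) (Σ l, α l × β l) ℂ) (l : κ) :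
    Matrix (α l) (α l) ℂ :=
  ptraceB (M.submatrix (fun t : α l × β l => ⟨l, t⟩) fun t => ⟨l, t⟩)

theorem blockPartialTrace_posDef [∀ l, Nonempty (β l)]
    {M : Matrix (Σ l, α l × β l) (Σ l, α l × β l) ℂ} (hM : M.PosDef) (l : κ) :
    (blockPartialTrace M l).PosDef :=
  ptraceB_posDef (hM.submatrix fun s t h => by simpa using h)

end BlockPartialTrace

section BlockKronecker

open scoped Kronecker

variable {κ : Type*} {α β : κ → Type*} [DecidableEq κ]

/-- The block-diagonal matrix `⊕ₗ Aₗ ⊗ Bₗ` on `⊕ₗ (ℂ^{α l} ⊗ ℂ^{β l})`. -/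
def blockKronecker {R : Type*} [MulZeroClass R] (A : ∀ l, Matrix (α l) (α l) R)
    (B : ∀ l, Matrix (β l) (β l) R) : Matrix (Σ l, α l × β l) (Σ l, α l × β l) R :=
  blockDiagonal' fun l => A l ⊗ₖ B l

theorem blockKronecker_one [∀ l, DecidableEq (α l)] [∀ l, DecidableEq (β l)] {R : Type*}
    [MulZeroOneClass R] :
    blockKronecker (1 : ∀ l, Matrix (α l) (α l) R) (1 : ∀ l, Matrix (β l) (β l) R) = 1 := by
  rw [blockKronecker, ← blockDiagonal'_one]
  exact congrArg blockDiagonal' (funext fun l => one_kronecker_one)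

theorem submatrix_blockKronecker {R : Type*} [MulZeroClass R] (A : ∀ l, Matrix (α l) (α l) R)
    (B : ∀ l, Matrix (β l) (β l) R) (l : κ) (i : α l) :
    (blockKronecker A B).submatrix (fun x : β l => ⟨l, i, x⟩) (fun x => ⟨l, i, x⟩) =
      A l i i • B l := by
  ext x y
  simp [blockKronecker, blockDiagonal'_apply]

variable [Fintype κ] [∀ l, Fintype (α l)] [∀ l, Fintype (β l)]

theorem blockKronecker_mul {R : Type*} [CommSemiring R] (A A' : ∀ l, Matrix (α l) (α l) R)
    (B B' : ∀ l, Matrix (β l) (β l) R) :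
    blockKronecker A B * blockKronecker A' B' = blockKronecker (A * A') (B * B') := by
  rw [blockKronecker, blockKronecker, blockKronecker, ← blockDiagonal'_mul]
  simp only [mul_kronecker_mul, Pi.mul_apply]

theorem blockKronecker_one_right_mul_apply [∀ l, DecidableEq (β l)] {ι R : Type*} [Semiring R]
    (A : ∀ l, Matrix (α l) (α l) R) (M : Matrix (Σ l, α l × β l) ι R)
    (l : κ) (i : α l) (x : β l) (t : ι) :
    (blockKronecker (β := β) A 1 * M) ⟨l, i, x⟩ t = ∑ j, A l i j * M ⟨l, j, x⟩ t := by
  rw [mul_apply, Fintype.sum_sigma, Fintype.sum_eq_single l, Fintype.sum_prod_type]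
  · simp [blockKronecker, blockDiagonal'_apply, kroneckerMap_apply, one_apply]
  · intro l' hl'
    simp [blockKronecker, blockDiagonal'_apply, hl'.symm]

theorem mul_blockKronecker_one_right_apply [∀ l, DecidableEq (β l)] {ι R : Type*} [Semiring R]
    (A : ∀ l, Matrix (α l) (α l) R) (M : Matrix ι (Σ l, α l × β l) R) (s : ι) (l : κ)
    (j : α l) (y : β l) :
    (M * blockKronecker (β := β) A 1) s ⟨l, j, y⟩ = ∑ i, M s ⟨l, i, y⟩ * A l i j := by
  rw [mul_apply, Fintype.sum_sigma, Fintype.sum_eq_single l, Fintype.sum_prod_type]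
  · simp [blockKronecker, blockDiagonal'_apply, kroneckerMap_apply, one_apply]
  · intro l' hl'
    simp [blockKronecker, blockDiagonal'_apply, hl']

theorem exists_eq_blockKronecker_one_left [∀ l, DecidableEq (α l)] [∀ l, DecidableEq (β l)]
    [∀ l, Nonempty (α l)] {R : Type*} [Semiring R]
    {C : Matrix (Σ l, α l × β l) (Σ l, α l × β l) R}
    (hC : ∀ A : ∀ l, Matrix (α l) (α l) R, Commute C (blockKronecker A 1)) :
    ∃ c : ∀ l, Matrix (β l) (β l) R, C = blockKronecker 1 c := by
  have entry (l : κ) (i j : α l) (x : β l) (t : Σ l, α l × β l) :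
      C ⟨l, j, x⟩ t =
        (C * blockKronecker (β := β) (Pi.single l (single i j (1 : R))) 1) ⟨l, i, x⟩ t := by
    rw [(hC _).eq, blockKronecker_one_right_mul_apply, Pi.single_eq_same]
    simp [single_apply]
  refine ⟨fun l => of fun x y =>
    C ⟨l, Classical.arbitrary (α l), x⟩ ⟨l, Classical.arbitrary (α l), y⟩, ?_⟩
  ext ⟨l, i, x⟩ ⟨l', j, y⟩
  by_cases hl : l = l'
  · subst hl
    rw [entry l (Classical.arbitrary (α l)) i, mul_blockKronecker_one_right_apply]
    simp [blockKronecker, blockDiagonal'_apply, single_apply, one_apply, ite_and]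
  · rw [entry l i i, mul_blockKronecker_one_right_apply]
    simp [blockKronecker, blockDiagonal'_apply, hl]

theorem blockPartialTrace_mul [∀ l, DecidableEq (β l)]
    (M : Matrix (Σ l, α l × β l) (Σ l, α l × β l) ℂ) (A : ∀ l, Matrix (α l) (α l) ℂ) :
    blockPartialTrace (M * blockKronecker A 1) = blockPartialTrace M * A := by
  ext l i j
  simp only [blockPartialTrace, ptraceB, of_apply, submatrix_apply, Pi.mul_apply,
    mul_blockKronecker_one_right_apply]
  simp only [mul_apply, of_apply, Finset.sum_mul]
  exact Finset.sum_comm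

theorem blockPartialTrace_blockKronecker_mul [∀ l, DecidableEq (β l)]
    (A : ∀ l, Matrix (α l) (α l) ℂ) (M : Matrix (Σ l, α l × β l) (Σ l, α l × β l) ℂ) :
    blockPartialTrace (blockKronecker A 1 * M) = A * blockPartialTrace M := by
  ext l i j
  simp only [blockPartialTrace, ptraceB, of_apply, submatrix_apply, Pi.mul_apply,
    blockKronecker_one_right_mul_apply]
  simp only [mul_apply, of_apply, Finset.mul_sum]
  exact Finset.sum_comm

/-- With `a = Tr_B M`, taking partial traces in the intertwining relation gives `A' = a A a⁻¹`, so
`(a⁻¹ ⊗ 1) M` commutes with every `A ⊗ 1`. -/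
theorem exists_eq_blockKronecker_of_intertwines [∀ l, DecidableEq (β l)] [∀ l, Nonempty (α l)]
    [∀ l, Nonempty (β l)]
    {M : Matrix (Σ l, α l × β l) (Σ l, α l × β l) ℂ} (hM : M.PosDef)
    (hmod : ∀ A : ∀ l, Matrix (α l) (α l) ℂ, ∃ A' : ∀ l, Matrix (α l) (α l) ℂ,
      blockKronecker A' 1 * M = M * blockKronecker A 1) :
    ∃ (a : ∀ l, Matrix (α l) (α l) ℂ) (c : ∀ l, Matrix (β l) (β l) ℂ),
      (∀ l, (a l).PosDef) ∧ (∀ l, (c l).PosDef) ∧ M = blockKronecker a c := by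
  classical
  set a := blockPartialTrace M with ha_def
  have ha : ∀ l, (a l).PosDef := blockPartialTrace_posDef hM
  obtain ⟨a', ha', haa'⟩ : ∃ a', a' * a = 1 ∧ a * a' = 1 := by
    choose u hu using fun l => (ha l).isUnit
    exact ⟨fun l => ↑(u l)⁻¹, by ext1 l; simp [← hu], by ext1 l; simp [← hu]⟩
  have hcomm (A : ∀ l, Matrix (α l) (α l) ℂ) :
      Commute (blockKronecker a' 1 * M) (blockKronecker A 1) := by
    obtain ⟨A', hA'⟩ := hmod A
    have hA'a : A' * a = a * A := by
      rw [ha_def, ← blockPartialTrace_blockKronecker_mul, hA', blockPartialTrace_mul]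
    calc blockKronecker a' 1 * M * blockKronecker A 1
        = blockKronecker (a' * (A' * a) * a') 1 * M := by
          rw [Matrix.mul_assoc, ← hA', ← Matrix.mul_assoc, blockKronecker_mul, mul_assoc, mul_assoc,
            haa', mul_one, mul_one]
      _ = blockKronecker A 1 * (blockKronecker a' 1 * M) := by
          rw [hA'a, ← mul_assoc, ha', one_mul, ← Matrix.mul_assoc, blockKronecker_mul, mul_one]
  obtain ⟨c, hc⟩ := exists_eq_blockKronecker_one_left hcomm
  have hMac : M = blockKronecker a c := by
    calc M = blockKronecker a 1 * (blockKronecker a' 1 * M) := by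
          rw [← Matrix.mul_assoc, blockKronecker_mul, haa', mul_one, blockKronecker_one,
            Matrix.one_mul]
      _ = blockKronecker a c := by rw [hc, blockKronecker_mul, mul_one, one_mul]
  refine ⟨a, c, ha, fun l => ?_, hMac⟩
  have i := Classical.arbitrary (α l)
  have hii : 0 < a l i i := (ha l).diag_pos
  have hblock : (a l i i • c l).PosDef := by
    rw [← submatrix_blockKronecker, ← hMac]
    exact hM.submatrix fun x y h => by simpa using h
  simpa [smul_smul, inv_mul_cancel₀ hii.ne'] using hblock.smul (inv_pos.mpr hii)

end BlockKronecker

section BlockPositivity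

open scoped Kronecker

theorem blockKronecker_posSemidef {κ : Type*} [Finite κ] [DecidableEq κ] {α β : κ → Type*}
    [∀ l, Finite (α l)] [∀ l, Finite (β l)]
    {A : ∀ l, Matrix (α l) (α l) ℂ} {B : ∀ l, Matrix (β l) (β l) ℂ}
    (hA : ∀ l, (A l).PosSemidef) (hB : ∀ l, (B l).PosSemidef) :
    (blockKronecker A B).PosSemidef := by
  have := Fintype.ofFinite κ
  have (l : κ) := Fintype.ofFinite (α l)
  have (l : κ) := Fintype.ofFinite (β l)
  choose S hS hSA using fun l => exists_posSemidef_mul_self (hA l)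
  choose T hT hTB using fun l => exists_posSemidef_mul_self (hB l)
  have hST : (blockKronecker S T)ᴴ = blockKronecker S T := by
    simp only [blockKronecker, blockDiagonal'_conjTranspose, conjTranspose_kronecker,
      (hS _).isHermitian.eq, (hT _).isHermitian.eq]
  rw [← funext hSA, ← funext hTB, ← Pi.mul_def, ← Pi.mul_def, ← blockKronecker_mul]
  simpa only [hST] using posSemidef_conjTranspose_mul_self (blockKronecker S T)

end BlockPositivity

section UnitaryConjugation

variable {ι κ : Type*} [Fintype ι] [Fintype κ] [DecidableEq κ]

theorem conj_mul_conj {W : Matrix ι κ ℂ} (hW : Wᴴ * W = 1) (M N : Matrix κ κ ℂ) :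
    W * M * Wᴴ * (W * N * Wᴴ) = W * (M * N) * Wᴴ := by
  simp only [Matrix.mul_assoc, ← Matrix.mul_assoc Wᴴ W, hW, Matrix.one_mul]

theorem exists_unitary_conj_submatrix_eq [DecidableEq ι] {W : Matrix ι κ ℂ} (hW : Wᴴ * W = 1)
    (hW' : W * Wᴴ = 1) : ∃ (e : ι ≃ κ) (U : Matrix ι ι ℂ), U ∈ unitaryGroup ι ℂ ∧
      ∀ M : Matrix κ κ ℂ, U * M.submatrix e e * Uᴴ = W * M * Wᴴ := by
  obtain ⟨e⟩ := Fintype.card_eq.mp (square_of_invertible W Wᴴ hW' hW)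
  have hsub (M : Matrix κ κ ℂ) :
      W.submatrix id e * M.submatrix e e * (W.submatrix id e)ᴴ = W * M * Wᴴ := by
    rw [conjTranspose_submatrix, submatrix_mul_equiv, submatrix_mul_equiv, submatrix_id_id]
  refine ⟨e, W.submatrix id e, mem_unitaryGroup_iff.mpr ?_, hsub⟩
  simp [star_eq_conjTranspose, hW']

end UnitaryConjugation

section ModularInvariance

variable {ι κ : Type*} [Fintype ι] [Fintype κ] [DecidableEq κ]
  {α β : κ → Type*} [∀ l, Fintype (α l)] [∀ l, Fintype (β l)]
  [∀ l, DecidableEq (α l)] [∀ l, DecidableEq (β l)]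

/-- The image of the algebra `⊕ₗ B(ℂ^{α l}) ⊗ 1` under the conjugation `M ↦ W M W†`. -/
def leftBlockOperators (W : Matrix ι (Σ l, α l × β l) ℂ) : Set (Matrix ι ι ℂ) :=
  Set.range fun Z : ∀ l, Matrix (α l) (α l) ℂ => W * blockKronecker (β := β) Z 1 * Wᴴ

theorem exists_eq_conj_blockKronecker [DecidableEq ι] [∀ l, Nonempty (α l)]
    [∀ l, Nonempty (β l)] {W : Matrix ι (Σ l, α l × β l) ℂ} (hW : Wᴴ * W = 1) (hW' : W * Wᴴ = 1)
    {ρ : Matrix ι ι ℂ} (hρ : ρ.PosDef)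
    (hmod : ∀ X ∈ leftBlockOperators W, ∃ X' ∈ leftBlockOperators W, X' * ρ = ρ * X) :
    ∃ (a : ∀ l, Matrix (α l) (α l) ℂ) (c : ∀ l, Matrix (β l) (β l) ℂ),
      (∀ l, (a l).PosDef) ∧ (∀ l, (c l).PosDef) ∧ ρ = W * blockKronecker a c * Wᴴ := by
  have hWinj : Function.Injective W.mulVec := fun v w h => by
    simpa [hW] using congrArg (Wᴴ *ᵥ ·) h
  obtain ⟨a, c, ha, hc, hac⟩ :=
    exists_eq_blockKronecker_of_intertwines (hρ.conjTranspose_mul_mul_same hWinj) fun Z => by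
      obtain ⟨_, ⟨Z', rfl⟩, hZ'⟩ := hmod _ ⟨Z, rfl⟩
      refine ⟨Z', ?_⟩
      have h := congrArg (Wᴴ * · * W) hZ'
      simpa only [Matrix.mul_assoc, hW, ← Matrix.mul_assoc Wᴴ W, Matrix.one_mul, Matrix.mul_one]
        using h
  refine ⟨a, c, ha, hc, ?_⟩
  rw [← hac]
  simp only [Matrix.mul_assoc, hW', ← Matrix.mul_assoc W Wᴴ, Matrix.one_mul, Matrix.mul_one]

theorem msqrt_conj_blockKronecker {W : Matrix ι (Σ l, α l × β l) ℂ} (hW : Wᴴ * W = 1)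
    {a : ∀ l, Matrix (α l) (α l) ℂ} {c : ∀ l, Matrix (β l) (β l) ℂ}
    (ha : ∀ l, (a l).PosSemidef) (hc : ∀ l, (c l).PosSemidef) :
    msqrt (W * blockKronecker a c * Wᴴ) =
      W * blockKronecker (fun l => msqrt (a l)) (fun l => msqrt (c l)) * Wᴴ := by
  refine msqrt_eq_of_mul_self ((blockKronecker_posSemidef (fun l => msqrt_posSemidef _)
    fun l => msqrt_posSemidef _).mul_mul_conjTranspose_same W) ?_
  rw [conj_mul_conj hW, blockKronecker_mul, Pi.mul_def, Pi.mul_def]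
  simp only [msqrt_mul_self (ha _), msqrt_mul_self (hc _)]

/-- With `s = √a`, one has `√ρ (Z ⊗ 1) √ρ = (s Z s⁻¹ ⊗ 1) ρ`. -/
theorem setOf_msqrt_mul_mul_msqrt_eq_image_mul_right {W : Matrix ι (Σ l, α l × β l) ℂ}
    (hW : Wᴴ * W = 1)
    {a : ∀ l, Matrix (α l) (α l) ℂ} {c : ∀ l, Matrix (β l) (β l) ℂ}
    (ha : ∀ l, (a l).PosDef) (hc : ∀ l, (c l).PosDef) {ρ : Matrix ι ι ℂ}
    (hρ : ρ = W * blockKronecker a c * Wᴴ) :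
    {X | ∃ Y ∈ leftBlockOperators W, X = msqrt ρ * Y * msqrt ρ} =
      (· * ρ) '' leftBlockOperators W := by
  set s : ∀ l, Matrix (α l) (α l) ℂ := fun l => msqrt (a l)
  set r : ∀ l, Matrix (β l) (β l) ℂ := fun l => msqrt (c l)
  have hss : s * s = a := funext fun l => msqrt_mul_self (ha l).posSemidef
  have hrr : r * r = c := funext fun l => msqrt_mul_self (hc l).posSemidef
  obtain ⟨s', hs's, hss'⟩ : ∃ s', s' * s = 1 ∧ s * s' = 1 := by
    obtain ⟨u, hu⟩ := Pi.isUnit_iff.mpr fun l => msqrt_isUnit (ha l)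
    exact ⟨↑u⁻¹, by rw [← show _ = s from hu, Units.inv_mul],
      by rw [← show _ = s from hu, Units.mul_inv]⟩
  have hmod (Z : ∀ l, Matrix (α l) (α l) ℂ) :
      msqrt ρ * (W * blockKronecker (β := β) Z 1 * Wᴴ) * msqrt ρ =
        W * blockKronecker (α := α) (β := β) (s * Z * s') 1 * Wᴴ * ρ := by
    have hs : s * Z * s' * a = s * Z * s := by
      rw [← hss, ← mul_assoc, mul_assoc _ s' s, hs's, mul_one]
    rw [hρ, msqrt_conj_blockKronecker hW (fun l => (ha l).posSemidef) fun l => (hc l).posSemidef,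
      conj_mul_conj hW, conj_mul_conj hW, conj_mul_conj hW, blockKronecker_mul, blockKronecker_mul,
      blockKronecker_mul, mul_one, one_mul, hrr, hs]
  ext X
  constructor
  · rintro ⟨_, ⟨Z, rfl⟩, rfl⟩
    exact ⟨_, ⟨s * Z * s', rfl⟩, (hmod Z).symm⟩
  · rintro ⟨_, ⟨Z, rfl⟩, rfl⟩
    refine ⟨_, ⟨s' * Z * s, rfl⟩, ?_⟩
    have hs : s * (s' * Z * s) * s' = Z := by
      rw [mul_assoc s' Z s, ← mul_assoc, hss', one_mul, mul_assoc, hss', mul_one]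
    rw [hmod, hs]

end ModularInvariance

section Normalization

open scoped Kronecker

theorem exists_pos_smul_trace_eq_one {n : Type*} [Fintype n] [Nonempty n] {A : Matrix n n ℂ}
    (hA : A.PosDef) : ∃ (t : ℝ) (B : Matrix n n ℂ), 0 < t ∧ B.PosDef ∧ B.trace = 1 ∧
      A = (t : ℂ) • B := by
  obtain ⟨t, ht, htA⟩ := RCLike.pos_iff_exists_ofReal.mp hA.trace_pos
  have ht' : (t : ℂ) ≠ 0 := by simpa using ht.ne'
  refine ⟨t, (t : ℂ)⁻¹ • A, ht, hA.smul (by simpa using ht), ?_, ?_⟩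
  · rw [trace_smul, ← htA, smul_eq_mul]
    exact inv_mul_cancel₀ ht'
  · rw [smul_smul, mul_inv_cancel₀ ht', one_smul]

theorem exists_blockDiagonal'_smul_kronecker_eq {κ : Type*} [DecidableEq κ] {α β : κ → Type*}
    [∀ l, Fintype (α l)] [∀ l, Fintype (β l)] [∀ l, Nonempty (α l)] [∀ l, Nonempty (β l)]
    {a : ∀ l, Matrix (α l) (α l) ℂ} {c : ∀ l, Matrix (β l) (β l) ℂ}
    (ha : ∀ l, (a l).PosDef) (hc : ∀ l, (c l).PosDef) :
    ∃ (p : κ → ℝ) (a₁ : ∀ l, Matrix (α l) (α l) ℂ) (c₁ : ∀ l, Matrix (β l) (β l) ℂ),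
      (∀ l, 0 < p l) ∧ (∀ l, (a₁ l).PosDef ∧ (a₁ l).trace = 1) ∧
      (∀ l, (c₁ l).PosDef ∧ (c₁ l).trace = 1) ∧
      blockKronecker a c = blockDiagonal' fun l => (p l : ℂ) • a₁ l ⊗ₖ c₁ l := by
  choose t a₁ ht ha₁ ha₁' hta using fun l => exists_pos_smul_trace_eq_one (ha l)
  choose u c₁ hu hc₁ hc₁' huc using fun l => exists_pos_smul_trace_eq_one (hc l)
  refine ⟨fun l => t l * u l, a₁, c₁, fun l => mul_pos (ht l) (hu l),
    fun l => ⟨ha₁ l, ha₁' l⟩, fun l => ⟨hc₁ l, hc₁' l⟩, ?_⟩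
  simp only [blockKronecker, hta, huc, smul_kronecker, kronecker_smul, smul_smul,
    Complex.ofReal_mul, mul_comm (u _ : ℂ)]

end Normalization

section Projections

variable {ι : Type*} [Fintype ι]

theorem exists_isStarProjection_mul_eq_smul [DecidableEq ι] {A : StarSubalgebra ℂ (Matrix ι ι ℂ)}
    {y : Matrix ι ι ℂ} (hy : y.IsHermitian) (hyA : y ∈ A) (hy0 : y ≠ 0) :
    ∃ (μ : ℝ) (q : Matrix ι ι ℂ), μ ≠ 0 ∧ q ≠ 0 ∧ q ∈ A ∧ IsStarProjection q ∧
      q * y = (μ : ℂ) • q := by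
  have hy' : IsSelfAdjoint y := hy.isSelfAdjoint
  have hclosed : IsClosed (A : Set (Matrix ι ι ℂ)) :=
    A.toSubalgebra.toSubmodule.closed_of_finiteDimensional
  have hcont (f : ℝ → ℝ) : ContinuousOn f (spectrum ℝ y) :=
    Matrix.finite_real_spectrum.continuousOn f
  obtain ⟨μ, hμ, hμ0⟩ : ∃ μ ∈ spectrum ℝ y, μ ≠ 0 := by
    by_contra! h
    exact hy0 (CFC.eq_zero_of_spectrum_subset_zero (R := ℝ) y h hy')
  let χ : ℝ → ℝ := fun x => if x = μ then 1 else 0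
  refine ⟨μ, cfc χ y, hμ0, fun h => ?_, cfc_mem (𝕜' := ℂ) χ hyA,
    ⟨?_, cfc_predicate χ y⟩, ?_⟩
  · have h1 : (1 : ℝ) ∈ spectrum ℝ (cfc χ y) := by
      rw [cfc_map_spectrum χ y hy' (hcont χ)]
      exact ⟨μ, hμ, by simp [χ]⟩
    have hnontriv : Nontrivial (Matrix ι ι ℂ) := ⟨y, 0, hy0⟩
    simp [h] at h1
  · rw [IsIdempotentElem, ← cfc_mul χ χ y (hcont χ) (hcont χ)]
    refine cfc_congr fun x _ => ?_
    simp [χ]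
  · have hχ : (fun x => χ x * x) = fun x => μ * χ x := by
      ext x
      by_cases hx : x = μ <;> simp [χ, hx]
    nth_rw 2 [← cfc_id' ℝ y hy']
    rw [← cfc_mul χ _ y (hcont χ) (hcont _), hχ, cfc_const_mul μ χ y (hcont χ)]
    rfl

theorem exists_isometry_mul_conjTranspose_eq {e : Matrix ι ι ℂ} (he : IsStarProjection e) :
    ∃ (k : ℕ) (F : Matrix ι (Fin k) ℂ), Fᴴ * F = 1 ∧ F * Fᴴ = e := by
  classical
  have hH : e.IsHermitian := he.isSelfAdjoint
  let U : Matrix ι ι ℂ := hH.eigenvectorUnitary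
  let J : Type _ := {i // hH.eigenvalues i = 1}
  have heig (i : ι) : hH.eigenvalues i = 0 ∨ hH.eigenvalues i = 1 :=
    he.isIdempotentElem.spectrum_subset ℝ (hH.eigenvalues_mem_spectrum_real i)
  let V : Matrix ι J ℂ := U.submatrix id Subtype.val
  have hV : Vᴴ * V = 1 := by
    have hU : Uᴴ * U = 1 := Unitary.coe_star_mul_self hH.eigenvectorUnitary
    rw [conjTranspose_submatrix, ← submatrix_mul _ _ _ _ _ Function.bijective_id, hU,
      submatrix_one _ Subtype.val_injective]
  have hV' : V * Vᴴ = e := by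
    have hspec : e = U * diagonal (fun i => (hH.eigenvalues i : ℂ)) * Uᴴ := hH.spectral_theorem
    refine Eq.trans ?_ hspec.symm
    ext x y
    rw [mul_apply, mul_apply]
    simp only [mul_diagonal, V, submatrix_apply, conjTranspose_apply, id]
    rw [← Finset.sum_subtype (Finset.univ.filter fun i => hH.eigenvalues i = 1) (by simp)
      (fun i => U x i * star (U y i)), Finset.sum_filter]
    refine Finset.sum_congr rfl fun i _ => ?_
    rcases heig i with h | h <;> simp [h]
  let g : Fin (Fintype.card J) ≃ J := (Fintype.equivFin J).symm
  refine ⟨_, V.submatrix id g, ?_, ?_⟩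
  · rw [conjTranspose_submatrix, ← submatrix_mul _ _ _ _ _ Function.bijective_id, hV,
      submatrix_one_equiv]
  · rw [conjTranspose_submatrix, submatrix_mul_equiv, submatrix_id_id, hV']

theorem rank_lt_rank_of_mul_eq {e f : Matrix ι ι ℂ} (hef : e * f = f) (hfe : f * e = f)
    (hf : IsIdempotentElem f) (hne : f ≠ e) : f.rank < e.rank := by
  classical
  have hle : LinearMap.range f.mulVecLin ≤ LinearMap.range e.mulVecLin := by
    rw [← hef, mulVecLin_mul]
    exact LinearMap.range_comp_le_range _ _
  refine Submodule.finrank_lt_finrank_of_lt (hle.lt_of_ne fun h => hne ?_)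
  rw [← hfe]
  refine Matrix.ext_of_mulVec_single fun i => ?_
  obtain ⟨w, hw⟩ : e *ᵥ Pi.single i 1 ∈ LinearMap.range f.mulVecLin := h ▸ ⟨_, rfl⟩
  rw [mulVecLin_apply] at hw
  rw [← mulVec_mulVec, ← hw, mulVec_mulVec, hf.eq]

end Projections

section MinimalProjections

variable {ι : Type*} [Fintype ι] [DecidableEq ι]

/-- A minimal projection of a star algebra of matrices, in the form used for Wedderburn theory:
a nonzero orthogonal projection `e ∈ A` whose corner `e A e` is one-dimensional. -/
structure IsMinimalProjection (A : StarSubalgebra ℂ (Matrix ι ι ℂ)) (e : Matrix ι ι ℂ) : Prop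
    extends IsStarProjection e where
  mem : e ∈ A
  ne_zero : e ≠ 0
  exists_mul_mul_eq_smul : ∀ x ∈ A, ∃ c : ℂ, e * x * e = c • e

variable {A : StarSubalgebra ℂ (Matrix ι ι ℂ)} {e f : Matrix ι ι ℂ}

theorem exists_mul_mul_eq_smul_of_isHermitian (hf : IsStarProjection f) (hfA : f ∈ A)
    (hmin : ∀ g ∈ A, IsStarProjection g → f * g = g → g = 0 ∨ g = f) {x : Matrix ι ι ℂ}
    (hx : x ∈ A) (hxH : x.IsHermitian) : ∃ c : ℂ, f * x * f = c • f := by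
  have hfH : fᴴ = f := hf.isSelfAdjoint
  have hff : f * f = f := hf.isIdempotentElem
  set y := f * x * f with hy
  have hyf : y * f = y := by rw [hy, Matrix.mul_assoc, hff]
  have hfy : f * y = y := by rw [hy, ← Matrix.mul_assoc, ← Matrix.mul_assoc, hff]
  by_cases hy0 : y = 0
  · exact ⟨0, by rw [hy0, zero_smul]⟩
  have hyH : y.IsHermitian := by
    simpa only [hfH] using isHermitian_mul_mul_conjTranspose f hxH
  obtain ⟨μ, q, hμ, hq0, hqA, hq, hqy⟩ :=
    exists_isStarProjection_mul_eq_smul hyH (mul_mem (mul_mem hfA hx) hfA) hy0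
  have hqf : q * f = q := by
    have h : (μ : ℂ) • (q * f) = (μ : ℂ) • q := by
      rw [← Matrix.smul_mul, ← hqy, Matrix.mul_assoc, hyf]
    exact smul_right_injective _ (by exact_mod_cast hμ) h
  have hfq : f * q = q := by
    simpa only [conjTranspose_mul, hfH, show qᴴ = q from hq.isSelfAdjoint]
      using congrArg conjTranspose hqf
  obtain rfl := (hmin q hqA hq hfq).resolve_left hq0
  exact ⟨μ, by rw [← hqy, hfy]⟩

theorem isMinimalProjection_of_forall (hf : IsStarProjection f) (hfA : f ∈ A) (hf0 : f ≠ 0)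
    (hmin : ∀ g ∈ A, IsStarProjection g → f * g = g → g = 0 ∨ g = f) :
    IsMinimalProjection A f := by
  refine ⟨hf, hfA, hf0, fun x hx => ?_⟩
  have herm := fun (z : Matrix ι ι ℂ) (hz : z ∈ A) (hzH : z.IsHermitian) =>
    exists_mul_mul_eq_smul_of_isHermitian hf hfA hmin hz hzH
  have hre : (realPart x : Matrix ι ι ℂ) ∈ A := by
    rw [realPart_apply_coe, ← Complex.coe_smul]
    exact A.smul_mem (add_mem hx (star_mem hx)) _
  have him : (imaginaryPart x : Matrix ι ι ℂ) ∈ A := by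
    rw [imaginaryPart_apply_coe, ← Complex.coe_smul]
    exact A.smul_mem (A.smul_mem (sub_mem hx (star_mem hx)) _) _
  obtain ⟨c, hc⟩ := herm _ hre (realPart x).2
  obtain ⟨d, hd⟩ := herm _ him (imaginaryPart x).2
  refine ⟨c + Complex.I * d, ?_⟩
  rw [← realPart_add_I_smul_imaginaryPart x, Matrix.mul_add, Matrix.add_mul, hc, Matrix.mul_smul,
    Matrix.smul_mul, hd, smul_smul, add_smul]

theorem exists_isMinimalProjection_mul_eq (he : IsStarProjection e) (heA : e ∈ A) (he0 : e ≠ 0) :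
    ∃ f, IsMinimalProjection A f ∧ e * f = f := by
  obtain ⟨f, ⟨hfA, hf, hf0, hef⟩, hmin⟩ := exists_minimalFor_of_wellFoundedLT
    (fun f => f ∈ A ∧ IsStarProjection f ∧ f ≠ 0 ∧ e * f = f) Matrix.rank
    ⟨e, heA, he, he0, he.isIdempotentElem⟩
  refine ⟨f, isMinimalProjection_of_forall hf hfA hf0 fun g hgA hg hfg => ?_, hef⟩
  by_contra! h
  have hgf : g * f = g := by
    simpa [hf.isSelfAdjoint.star_eq, hg.isSelfAdjoint.star_eq] using congrArg star hfg
  have hlt := rank_lt_rank_of_mul_eq hfg hgf hg.isIdempotentElem h.2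
  have hle := hmin ⟨hgA, hg, h.1, by rw [← hfg, ← Matrix.mul_assoc, hef]⟩ hlt.le
  exact hlt.not_ge hle

theorem exists_finset_isMinimalProjection_sum_eq (he : IsStarProjection e) (heA : e ∈ A) :
    ∃ s : Finset (Matrix ι ι ℂ), (∀ p ∈ s, IsMinimalProjection A p) ∧
      (s : Set (Matrix ι ι ℂ)).Pairwise (fun p q => p * q = 0) ∧ ∑ p ∈ s, p = e := by
  induction hr : e.rank using Nat.strong_induction_on generalizing e with
  | _ r ih =>
  by_cases he0 : e = 0
  · exact ⟨∅, by simp, by simp, by simp [he0]⟩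
  obtain ⟨f, hf, hef⟩ := exists_isMinimalProjection_mul_eq he heA he0
  have hfe : f * e = f := by
    simpa [hf.isSelfAdjoint.star_eq, he.isSelfAdjoint.star_eq] using congrArg star hef
  have hff : f * f = f := hf.isIdempotentElem
  have hsub : IsStarProjection (e - f) := hf.toIsStarProjection.sub_of_mul_eq_left he hfe
  obtain ⟨t, ht, htt, hsum⟩ := ih (e - f).rank
    (hr ▸ rank_lt_rank_of_mul_eq
      (by rw [Matrix.mul_sub, hef, he.isIdempotentElem.eq])
      (by rw [Matrix.sub_mul, hfe, he.isIdempotentElem.eq])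
      hsub.isIdempotentElem (by simpa using hf.ne_zero))
    hsub (sub_mem heA hf.mem) rfl
  have hfp : ∀ p ∈ t, f * p = 0 := fun p hp => by
    have hsp : (e - f) * p = p := by
      rw [← hsum, Finset.sum_mul, Finset.sum_eq_single_of_mem p hp fun q hq hqp => htt hq hp hqp]
      exact (ht p hp).isIdempotentElem
    rw [← hsp, ← Matrix.mul_assoc, Matrix.mul_sub, hfe, hff, sub_self, Matrix.zero_mul]
  have hft : f ∉ t := fun h => hf.ne_zero (hff ▸ hfp f h)
  refine ⟨insert f t, ?_, ?_, ?_⟩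
  · simpa using ⟨hf, ht⟩
  · rw [Finset.coe_insert]
    refine htt.insert fun p hp _ => ⟨hfp p hp, ?_⟩
    simpa [hf.isSelfAdjoint.star_eq, (ht p hp).isSelfAdjoint.star_eq]
      using congrArg star (hfp p hp)
  · rw [Finset.sum_insert hft, hsum, add_sub_cancel]

end MinimalProjections

section MurrayVonNeumann

variable {ι : Type*} [Fintype ι] [DecidableEq ι] {A : StarSubalgebra ℂ (Matrix ι ι ℂ)}
  {p q r x : Matrix ι ι ℂ}

/-- Murray–von Neumann equivalence of the projections `p` and `q`, witnessed by a partial isometry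
of `A`. Its classes of minimal projections index the blocks of `A`. -/
def MurrayVonNeumannEquiv (A : StarSubalgebra ℂ (Matrix ι ι ℂ)) (p q : Matrix ι ι ℂ) : Prop :=
  ∃ u ∈ A, u * uᴴ = p ∧ uᴴ * u = q

namespace MurrayVonNeumannEquiv

theorem refl (hp : IsStarProjection p) (hpA : p ∈ A) : MurrayVonNeumannEquiv A p p := by
  have hpp : p * p = p := hp.isIdempotentElem
  have hpH : pᴴ = p := hp.isSelfAdjoint
  exact ⟨p, hpA, by rw [hpH, hpp], by rw [hpH, hpp]⟩

theorem symm (h : MurrayVonNeumannEquiv A p q) : MurrayVonNeumannEquiv A q p := by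
  obtain ⟨u, hu, hup, huq⟩ := h
  exact ⟨uᴴ, star_mem hu, by rwa [conjTranspose_conjTranspose],
    by rwa [conjTranspose_conjTranspose]⟩

theorem trans (hp : IsIdempotentElem p) (hr : IsIdempotentElem r)
    (h : MurrayVonNeumannEquiv A p q) (h' : MurrayVonNeumannEquiv A q r) :
    MurrayVonNeumannEquiv A p r := by
  obtain ⟨u, hu, hup, huq⟩ := h
  obtain ⟨v, hv, hvq, hvr⟩ := h'
  refine ⟨u * v, mul_mem hu hv, ?_, ?_⟩
  · calc u * v * (u * v)ᴴ = u * (v * vᴴ) * uᴴ := by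
          simp only [conjTranspose_mul, Matrix.mul_assoc]
      _ = (u * uᴴ) * (u * uᴴ) := by rw [hvq, ← huq]; simp only [Matrix.mul_assoc]
      _ = p := by rw [hup, hp.eq]
  · calc (u * v)ᴴ * (u * v) = vᴴ * (uᴴ * u) * v := by
          simp only [conjTranspose_mul, Matrix.mul_assoc]
      _ = (vᴴ * v) * (vᴴ * v) := by rw [huq, ← hvq]; simp only [Matrix.mul_assoc]
      _ = r := by rw [hvr, hr.eq]

end MurrayVonNeumannEquiv

theorem IsMinimalProjection.exists_mul_conjTranspose_eq_smul (hp : IsMinimalProjection A p)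
    (hq : IsMinimalProjection A q) (hx : x ∈ A) (hpxq : p * x * q ≠ 0) :
    ∃ t : ℝ, 0 < t ∧ p * x * q * (p * x * q)ᴴ = (t : ℂ) • p ∧
      (p * x * q)ᴴ * (p * x * q) = (t : ℂ) • q := by
  have hpH : pᴴ = p := hp.isSelfAdjoint
  have hqH : qᴴ = q := hq.isSelfAdjoint
  have hpp : p * p = p := hp.isIdempotentElem
  have hqq : q * q = q := hq.isIdempotentElem
  have hxA : xᴴ ∈ A := star_mem hx
  set y := p * x * q with hy
  have hyH : yᴴ = q * xᴴ * p := by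
    rw [hy, conjTranspose_mul, conjTranspose_mul, hpH, hqH, Matrix.mul_assoc]
  obtain ⟨c, hc⟩ := hp.exists_mul_mul_eq_smul (x * q * xᴴ) (mul_mem (mul_mem hx hq.mem) hxA)
  obtain ⟨d, hd⟩ := hq.exists_mul_mul_eq_smul (xᴴ * p * x) (mul_mem (mul_mem hxA hp.mem) hx)
  have hyyH : y * yᴴ = c • p := by
    rw [← hc, hyH, hy]
    simp only [Matrix.mul_assoc, ← Matrix.mul_assoc q q, hqq]
  have hyHy : yᴴ * y = d • q := by
    rw [← hd, hyH, hy]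
    simp only [Matrix.mul_assoc, ← Matrix.mul_assoc p p, hpp]
  obtain rfl : c = d := by
    refine smul_left_injective ℂ hpxq ?_
    calc c • y = y * yᴴ * y := by
          rw [hyyH, Matrix.smul_mul, hy, ← Matrix.mul_assoc, ← Matrix.mul_assoc, hpp]
      _ = d • y := by rw [Matrix.mul_assoc, hyHy, Matrix.mul_smul, hy, Matrix.mul_assoc, hqq]
  obtain ⟨t, ht, rfl⟩ := RCLike.pos_iff_exists_ofReal.mp
    (pos_of_mul_conjTranspose_self_eq_smul hp.toIsStarProjection hpxq hyyH)
  exact ⟨t, ht, hyyH, hyHy⟩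

theorem IsMinimalProjection.murrayVonNeumannEquiv (hp : IsMinimalProjection A p)
    (hq : IsMinimalProjection A q) (hx : x ∈ A) (hpxq : p * x * q ≠ 0) :
    MurrayVonNeumannEquiv A p q := by
  obtain ⟨t, ht, hyyH, hyHy⟩ := hp.exists_mul_conjTranspose_eq_smul hq hx hpxq
  have hnormalize : (t.sqrt : ℂ)⁻¹ * (t.sqrt : ℂ)⁻¹ * (t : ℂ) = 1 := by
    rw [← mul_inv, ← Complex.ofReal_mul, Real.mul_self_sqrt ht.le]
    exact inv_mul_cancel₀ (by exact_mod_cast ht.ne')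
  have hstar : star (t.sqrt : ℂ)⁻¹ = (t.sqrt : ℂ)⁻¹ := by
    rw [star_inv₀]
    exact congrArg _ (Complex.conj_ofReal _)
  refine ⟨(t.sqrt : ℂ)⁻¹ • (p * x * q), A.smul_mem (mul_mem (mul_mem hp.mem hx) hq.mem) _, ?_, ?_⟩
  · rw [conjTranspose_smul, hstar, Matrix.smul_mul, Matrix.mul_smul, hyyH, smul_smul, smul_smul,
      hnormalize, one_smul]
  · rw [conjTranspose_smul, hstar, Matrix.smul_mul, Matrix.mul_smul, hyHy, smul_smul, smul_smul,
      hnormalize, one_smul]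

end MurrayVonNeumann

theorem exists_sigma_equiv_of_setoid {n : Type*} [Finite n] (r : Setoid n) :
    ∃ (b : ℕ) (d : Fin b → ℕ) (σ : (Σ l, Fin (d l)) ≃ n), (∀ l, 0 < d l) ∧
      ∀ s t, r (σ s) (σ t) ↔ s.1 = t.1 := by
  classical
  obtain ⟨b, ⟨g⟩⟩ := Finite.exists_equiv_fin (Quotient r)
  have := Fintype.ofFinite n
  let cls : n → Fin b := fun i => g ⟦i⟧
  let σ : (Σ l, Fin (Fintype.card {i // cls i = l})) ≃ n :=
    (Equiv.sigmaCongrRight fun l => (Fintype.equivFin {i // cls i = l}).symm).trans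
      (Equiv.sigmaFiberEquiv cls)
  have hσ (s) : cls (σ s) = s.1 := ((Fintype.equivFin {i // cls i = s.1}).symm s.2).2
  refine ⟨b, _, σ, fun l => ?_, fun s t => ?_⟩
  · obtain ⟨i, hi⟩ := Quotient.exists_rep (g.symm l)
    exact Fintype.card_pos_iff.mpr ⟨⟨i, by simp [cls, hi]⟩⟩
  · rw [← hσ s, ← hσ t, g.injective.eq_iff, Quotient.eq]

section BlockIsometries

variable {ι κ : Type*} {α β : κ → Type*}

/-- The matrix with columns indexed by `⊕ₗ (α l × β l)` obtained by placing the matrices `V l a`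
side by side. -/
def concatBlocks {R : Type*} (V : ∀ l, α l → Matrix ι (β l) R) :
    Matrix ι (Σ l, α l × β l) R :=
  of fun x s => V s.1 s.2.1 x s.2.2

theorem concatBlocks_apply {R : Type*} (V : ∀ l, α l → Matrix ι (β l) R) (x : ι)
    (s : Σ l, α l × β l) : concatBlocks V x s = V s.1 s.2.1 x s.2.2 :=
  rfl

theorem conjTranspose_concatBlocks_mul_mul_apply [Fintype ι]
    (V : ∀ l, α l → Matrix ι (β l) ℂ) (X : Matrix ι ι ℂ) (s t : Σ l, α l × β l) :
    ((concatBlocks V)ᴴ * X * concatBlocks V) s t =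
      ((V s.1 s.2.1)ᴴ * X * V t.1 t.2.1) s.2.2 t.2.2 :=
  rfl

variable [Fintype κ] [∀ l, Fintype (α l)] [∀ l, Fintype (β l)] [∀ l, DecidableEq (β l)]

theorem concatBlocks_mul_blockKronecker_one_mul [DecidableEq κ]
    (V : ∀ l, α l → Matrix ι (β l) ℂ) (Z : ∀ l, Matrix (α l) (α l) ℂ) :
    concatBlocks V * blockKronecker (β := β) Z 1 * (concatBlocks V)ᴴ =
      ∑ l, ∑ a, ∑ a', Z l a a' • (V l a * (V l a')ᴴ) := by
  have hcol (x : ι) (l : κ) (a' : α l) (i : β l) :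
      (concatBlocks V * blockKronecker (β := β) Z 1) x ⟨l, a', i⟩ =
        ∑ a, V l a x i * Z l a a' :=
    mul_blockKronecker_one_right_apply Z (concatBlocks V) x l a' i
  ext x y
  rw [mul_apply, Fintype.sum_sigma]
  simp only [Fintype.sum_prod_type, hcol, conjTranspose_apply, concatBlocks_apply]
  simp only [Matrix.sum_apply, Matrix.smul_apply, mul_apply, conjTranspose_apply, smul_eq_mul,
    Finset.sum_mul, Finset.mul_sum]
  refine Finset.sum_congr rfl fun l _ => ?_
  rw [Finset.sum_comm_cycle]
  simp only [mul_comm (Z _ _ _), mul_right_comm]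

variable [Fintype ι] [DecidableEq ι]

/-- A system of isometries `V l a : ℂ^{β l} → ℂ^ι` with complementary ranges adapted to `A`: the
products `V l a (V l a')†` are matrix units of `A`, and the compressions of elements of `A` are
scalar within a block `l` and vanish between different blocks. -/
structure IsMatrixUnitSystem (A : StarSubalgebra ℂ (Matrix ι ι ℂ))
    (V : ∀ l, α l → Matrix ι (β l) ℂ) : Prop where
  mul_conjTranspose_mem : ∀ l a a', V l a * (V l a')ᴴ ∈ A
  sum_mul_conjTranspose : ∑ l, ∑ a, V l a * (V l a)ᴴ = 1
  conjTranspose_mul_self : ∀ l a, (V l a)ᴴ * V l a = 1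
  conjTranspose_mul_of_ne : ∀ l a a', a ≠ a' → (V l a)ᴴ * V l a' = 0
  exists_conjTranspose_mul_mul_eq : ∀ X ∈ A, ∀ l a a', ∃ c : ℂ, (V l a)ᴴ * X * V l a' = c • 1
  conjTranspose_mul_mul_of_ne : ∀ X ∈ A, ∀ l l' a a', l ≠ l' → (V l a)ᴴ * X * V l' a' = 0

namespace IsMatrixUnitSystem

variable {A : StarSubalgebra ℂ (Matrix ι ι ℂ)} {V : ∀ l, α l → Matrix ι (β l) ℂ}

theorem exists_conjTranspose_mul_mul_eq_blockKronecker [DecidableEq κ]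
    (hV : IsMatrixUnitSystem A V) {X : Matrix ι ι ℂ} (hX : X ∈ A) : ∃ Z : ∀ l, Matrix (α l) (α l) ℂ,
      (concatBlocks V)ᴴ * X * concatBlocks V = blockKronecker Z 1 := by
  choose c hc using hV.exists_conjTranspose_mul_mul_eq X hX
  refine ⟨fun l => of (c l), ?_⟩
  ext ⟨l, a, i⟩ ⟨l', a', i'⟩
  rw [conjTranspose_concatBlocks_mul_mul_apply]
  by_cases hl : l = l'
  · subst hl
    simp [hc, blockKronecker, blockDiagonal'_apply]
  · simp [hV.conjTranspose_mul_mul_of_ne X hX l l' a a' hl, blockKronecker, blockDiagonal'_apply,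
      hl]

theorem concatBlocks_mul_conjTranspose (hV : IsMatrixUnitSystem A V) :
    concatBlocks V * (concatBlocks V)ᴴ = 1 := by
  classical
  have h := concatBlocks_mul_blockKronecker_one_mul V 1
  rw [blockKronecker_one, Matrix.mul_one] at h
  rw [h, ← hV.sum_mul_conjTranspose]
  simp [one_apply]

theorem conjTranspose_concatBlocks_mul [DecidableEq κ] [∀ l, DecidableEq (α l)]
    (hV : IsMatrixUnitSystem A V) :
    (concatBlocks V)ᴴ * concatBlocks V = 1 := by
  ext ⟨l, a, i⟩ ⟨l', a', i'⟩
  have h := conjTranspose_concatBlocks_mul_mul_apply V 1 ⟨l, a, i⟩ ⟨l', a', i'⟩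
  rw [Matrix.mul_one] at h
  rw [h]
  by_cases hl : l = l'
  · subst hl
    rw [Matrix.mul_one]
    by_cases ha : a = a'
    · subst ha
      simp [hV.conjTranspose_mul_self, one_apply]
    · simp [hV.conjTranspose_mul_of_ne l a a' ha, ha]
  · rw [hV.conjTranspose_mul_mul_of_ne 1 (one_mem A) l l' a a' hl]
    simp [hl]

theorem coe_eq_leftBlockOperators [DecidableEq κ] (hV : IsMatrixUnitSystem A V) :
    (A : Set (Matrix ι ι ℂ)) = leftBlockOperators (concatBlocks V) := by
  ext X
  constructor
  · intro hX
    obtain ⟨Z, hZ⟩ := hV.exists_conjTranspose_mul_mul_eq_blockKronecker hX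
    refine ⟨Z, ?_⟩
    have hW := hV.concatBlocks_mul_conjTranspose
    simp only [← hZ, Matrix.mul_assoc, hW, Matrix.mul_one, ← Matrix.mul_assoc (concatBlocks V),
      Matrix.one_mul]
  · rintro ⟨Z, rfl⟩
    simp only [concatBlocks_mul_blockKronecker_one_mul]
    exact sum_mem fun l _ => sum_mem fun a _ => sum_mem fun a' _ =>
      A.smul_mem (hV.mul_conjTranspose_mem l a a') _

end IsMatrixUnitSystem

end BlockIsometries

section Isometries

variable {ι β γ : Type*} [Fintype ι] [Fintype β]

theorem mul_mul_conjTranspose_mul_of_isometry {p : Matrix ι ι ℂ} {F : Matrix ι β ℂ}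
    (hp : F * Fᴴ = p) (u v : Matrix ι ι ℂ) : u * F * (v * F)ᴴ = u * p * vᴴ := by
  rw [← hp, conjTranspose_mul]
  simp only [Matrix.mul_assoc]

variable [DecidableEq β] {p q : Matrix ι ι ℂ} {F : Matrix ι β ℂ} {G : Matrix ι γ ℂ}

theorem mul_eq_self_of_isometry (hF : Fᴴ * F = 1) (hp : F * Fᴴ = p) : p * F = F := by
  rw [← hp, Matrix.mul_assoc, hF, Matrix.mul_one]

theorem conjTranspose_mul_eq_self_of_isometry (hF : Fᴴ * F = 1) (hp : F * Fᴴ = p) :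
    Fᴴ * p = Fᴴ := by
  rw [← hp, ← Matrix.mul_assoc, hF, Matrix.one_mul]

theorem conjTranspose_mul_mul_of_isometry [Fintype γ] [DecidableEq γ] (hF : Fᴴ * F = 1)
    (hp : F * Fᴴ = p) (hG : Gᴴ * G = 1) (hq : G * Gᴴ = q) (X : Matrix ι ι ℂ) :
    Fᴴ * X * G = Fᴴ * (p * X * q) * G := by
  rw [← Matrix.mul_assoc, ← Matrix.mul_assoc, conjTranspose_mul_eq_self_of_isometry hF hp,
    Matrix.mul_assoc (Fᴴ * X), mul_eq_self_of_isometry hG hq]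

end Isometries

section StructureTheorem

variable {ι : Type*} [Fintype ι] [DecidableEq ι] {A : StarSubalgebra ℂ (Matrix ι ι ℂ)}

theorem exists_isMinimalProjection_family (A : StarSubalgebra ℂ (Matrix ι ι ℂ)) :
    ∃ (b : ℕ) (d : Fin b → ℕ) (P : (Σ l, Fin (d l)) → Matrix ι ι ℂ), (∀ l, 0 < d l) ∧
      (∀ s, IsMinimalProjection A (P s)) ∧ Pairwise (fun s t => P s * P t = 0) ∧ ∑ s, P s = 1 ∧
      ∀ s t, MurrayVonNeumannEquiv A (P s) (P t) ↔ s.1 = t.1 := by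
  obtain ⟨S, hS, horth, hsum⟩ :=
    exists_finset_isMinimalProjection_sum_eq (A := A) (.one _) (one_mem A)
  let r : Setoid S :=
    { r := fun p q => MurrayVonNeumannEquiv A (p : Matrix ι ι ℂ) q
      iseqv :=
        { refl := fun p => .refl (hS p p.2).toIsStarProjection (hS p p.2).mem
          symm := .symm
          trans := fun {p _ q} =>
            .trans (hS p p.2).isIdempotentElem (hS q q.2).isIdempotentElem } }
  obtain ⟨b, d, σ, hd, hσ⟩ := exists_sigma_equiv_of_setoid r
  refine ⟨b, d, fun s => σ s, hd, fun s => hS _ (σ s).2, fun s t hst => ?_, ?_, hσ⟩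
  · exact horth (σ s).2 (σ t).2 fun h => hst (σ.injective (Subtype.ext h))
  · rw [Equiv.sum_comp σ (fun p : S => (p : Matrix ι ι ℂ)), Finset.sum_coe_sort S fun p => p, hsum]

theorem isMatrixUnitSystem_mul {κ : Type*} [Fintype κ] {α β : κ → Type*} [∀ l, Fintype (α l)]
    [∀ l, Fintype (β l)] [∀ l, DecidableEq (β l)]
    {P : (Σ l, α l) → Matrix ι ι ℂ} {Q : κ → Matrix ι ι ℂ}
    (hP : ∀ s, IsMinimalProjection A (P s)) (hQ : ∀ l, IsMinimalProjection A (Q l))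
    (horth : Pairwise fun s t => P s * P t = 0) (hsum : ∑ s, P s = 1)
    (hequiv : ∀ s t, MurrayVonNeumannEquiv A (P s) (P t) → s.1 = t.1)
    {u : ∀ l, α l → Matrix ι ι ℂ} (huA : ∀ l a, u l a ∈ A) (hu : ∀ l a, u l a * (u l a)ᴴ = P ⟨l, a⟩)
    (hu' : ∀ l a, (u l a)ᴴ * u l a = Q l) {F : ∀ l, Matrix ι (β l) ℂ}
    (hF : ∀ l, (F l)ᴴ * F l = 1) (hF' : ∀ l, F l * (F l)ᴴ = Q l) :
    IsMatrixUnitSystem A fun l a => u l a * F l := by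
  have hrange (l a) : u l a * F l * (u l a * F l)ᴴ = P ⟨l, a⟩ := by
    rw [mul_mul_conjTranspose_mul_of_isometry (hF' l), ← hu' l a, ← Matrix.mul_assoc,
      Matrix.mul_assoc (_ * _), hu, (hP _).isIdempotentElem.eq]
  have hisom (l a) : (u l a * F l)ᴴ * (u l a * F l) = 1 := by
    rw [conjTranspose_mul, Matrix.mul_assoc, ← Matrix.mul_assoc _ (u l a), hu',
      mul_eq_self_of_isometry (hF l) (hF' l), hF]
  have hcompress (X : Matrix ι ι ℂ) (l a l' a') :
      (u l a * F l)ᴴ * X * (u l' a' * F l') =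
        (u l a * F l)ᴴ * (P ⟨l, a⟩ * X * P ⟨l', a'⟩) * (u l' a' * F l') :=
    conjTranspose_mul_mul_of_isometry (hisom l a) (hrange l a) (hisom l' a') (hrange l' a') X
  refine ⟨fun l a a' => ?_, ?_, hisom, fun l a a' haa' => ?_, fun X hX l a a' => ?_,
    fun X hX l l' a a' hll' => ?_⟩
  · rw [mul_mul_conjTranspose_mul_of_isometry (hF' l)]
    exact mul_mem (mul_mem (huA l a) (hQ l).mem) (star_mem (huA l a'))
  · simp only [hrange, ← hsum, Fintype.sum_sigma]
  · have h := hcompress 1 l a l a'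
    rw [Matrix.mul_one, Matrix.mul_one] at h
    rw [h, horth (by simpa using haa'), Matrix.mul_zero, Matrix.zero_mul]
  · obtain ⟨c, hc⟩ := (hQ l).exists_mul_mul_eq_smul _
      (mul_mem (mul_mem (star_mem (huA l a)) hX) (huA l a'))
    refine ⟨c, ?_⟩
    calc (u l a * F l)ᴴ * X * (u l a' * F l)
        = (F l)ᴴ * ((u l a)ᴴ * X * u l a') * F l := by
          simp only [conjTranspose_mul, Matrix.mul_assoc]
      _ = (F l)ᴴ * (Q l * ((u l a)ᴴ * X * u l a') * Q l) * F l := by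
          rw [conjTranspose_mul_mul_of_isometry (hF l) (hF' l) (hF l) (hF' l)]
      _ = c • 1 := by
          rw [← star_eq_conjTranspose (u l a), hc, Matrix.mul_smul, Matrix.smul_mul,
            Matrix.mul_assoc, mul_eq_self_of_isometry (hF l) (hF' l), hF]
  · have hzero : P ⟨l, a⟩ * X * P ⟨l', a'⟩ = 0 := by
      by_contra h
      exact hll' (hequiv _ _ ((hP _).murrayVonNeumannEquiv (hP _) hX h))
    rw [hcompress, hzero, Matrix.mul_zero, Matrix.zero_mul]

theorem exists_isMatrixUnitSystem (A : StarSubalgebra ℂ (Matrix ι ι ℂ)) :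
    ∃ (b : ℕ) (dA dB : Fin b → ℕ) (V : ∀ l, Fin (dA l) → Matrix ι (Fin (dB l)) ℂ),
      (∀ l, 0 < dA l) ∧ (∀ l, 0 < dB l) ∧ IsMatrixUnitSystem A V := by
  obtain ⟨b, dA, P, hdA, hP, horth, hsum, hequiv⟩ := exists_isMinimalProjection_family A
  let Q (l : Fin b) : Matrix ι ι ℂ := P ⟨l, 0, hdA l⟩
  have hQ (l) : IsMinimalProjection A (Q l) := hP _
  choose dB F hF hF' using fun l => exists_isometry_mul_conjTranspose_eq (hQ l).toIsStarProjection
  choose u huA hu hu' using fun l a => (hequiv ⟨l, a⟩ ⟨l, 0, hdA l⟩).mpr rfl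
  refine ⟨b, dA, dB, fun l a => u l a * F l, hdA, fun l => Nat.pos_of_ne_zero fun h => ?_,
    isMatrixUnitSystem_mul hP hQ horth hsum (fun s t => (hequiv s t).mp) huA hu hu' hF hF'⟩
  have : IsEmpty (Fin (dB l)) := by rw [h]; infer_instance
  exact (hQ l).ne_zero (by rw [← hF' l, Subsingleton.elim (F l) 0, Matrix.zero_mul])

theorem exists_coe_eq_leftBlockOperators (A : StarSubalgebra ℂ (Matrix ι ι ℂ)) :
    ∃ (b : ℕ) (dA dB : Fin b → ℕ) (W : Matrix ι (Σ l, Fin (dA l) × Fin (dB l)) ℂ),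
      (∀ l, Nonempty (Fin (dA l))) ∧ (∀ l, Nonempty (Fin (dB l))) ∧ Wᴴ * W = 1 ∧ W * Wᴴ = 1 ∧
      (A : Set (Matrix ι ι ℂ)) = leftBlockOperators W := by
  obtain ⟨b, dA, dB, V, hdA, hdB, hV⟩ := exists_isMatrixUnitSystem A
  exact ⟨b, dA, dB, concatBlocks V, fun l => Fin.pos_iff_nonempty.mp (hdA l),
    fun l => Fin.pos_iff_nonempty.mp (hdB l), hV.conjTranspose_concatBlocks_mul,
    hV.concatBlocks_mul_conjTranspose, hV.coe_eq_leftBlockOperators⟩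

end StructureTheorem

/-! ### Statement 0 -/

theorem stmt0
    {ι : Type*} [Fintype ι] [DecidableEq ι]
    (L Ld : Matrix ι ι ℂ →ₗ[ℂ] Matrix ι ι ℂ)
    (hL : IsLindblad L) (hLd : IsHSAdjoint L Ld)
    (ρ : Matrix ι ι ℂ) (hρ : ρ.PosDef) (hρtr : ρ.trace = 1) (hρfix : L ρ = 0) :
    ((LinearMap.ker L : Set (Matrix ι ι ℂ)) =
        {X | ∃ Y ∈ LinearMap.ker Ld, X = msqrt ρ * Y * msqrt ρ}) ∧
      ∃ (b : ℕ) (dA dB : Fin b → ℕ)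
        (e : ι ≃ (Σ ℓ : Fin b, Fin (dA ℓ) × Fin (dB ℓ)))
        (U : Matrix ι ι ℂ), U ∈ Matrix.unitaryGroup ι ℂ ∧
        ((LinearMap.ker Ld : Set (Matrix ι ι ℂ)) =
          {X | ∃ A : ∀ ℓ, Matrix (Fin (dA ℓ)) (Fin (dA ℓ)) ℂ,
            X = U * ((Matrix.blockDiagonal' fun ℓ =>
              Matrix.kroneckerMap (· * ·) (A ℓ)
                (1 : Matrix (Fin (dB ℓ)) (Fin (dB ℓ)) ℂ)).submatrix e e) * Uᴴ}) ∧
        ∃ (p : Fin b → ℝ) (ρA : ∀ ℓ, Matrix (Fin (dA ℓ)) (Fin (dA ℓ)) ℂ)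
          (τB : ∀ ℓ, Matrix (Fin (dB ℓ)) (Fin (dB ℓ)) ℂ),
          (∀ ℓ, 0 < p ℓ) ∧
          (∀ ℓ, (ρA ℓ).PosDef ∧ (ρA ℓ).trace = 1) ∧
          (∀ ℓ, (τB ℓ).PosDef ∧ (τB ℓ).trace = 1) ∧
          ρ = U * ((Matrix.blockDiagonal' fun ℓ => (p ℓ : ℂ) •
            Matrix.kroneckerMap (· * ·) (ρA ℓ) (τB ℓ)).submatrix e e) * Uᴴ := by
  obtain ⟨𝒜, hkerd, hker, hmod⟩ := exists_starSubalgebra_ker_eq hL hLd hρ hρfix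
  obtain ⟨b, dA, dB, W, hdA, hdB, hW, hW', h𝒜⟩ := exists_coe_eq_leftBlockOperators 𝒜
  simp only [← SetLike.mem_coe, h𝒜] at hkerd hker hmod
  obtain ⟨a, c, ha, hc, hac⟩ := exists_eq_conj_blockKronecker hW hW' hρ hmod
  obtain ⟨e, U, hU, hUW⟩ := exists_unitary_conj_submatrix_eq hW hW'
  obtain ⟨p, ρA, τB, hp, hρA, hτB, hnorm⟩ := exists_blockDiagonal'_smul_kronecker_eq ha hc
  refine ⟨?_, b, dA, dB, e, U, hU, ?_, p, ρA, τB, hp, hρA, hτB, ?_⟩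
  · simp only [← SetLike.mem_coe, hkerd]
    rw [hker, setOf_msqrt_mul_mul_msqrt_eq_image_mul_right hW ha hc hac]
  · simp only [hUW, hkerd]
    exact Set.ext fun X => exists_congr fun Z => eq_comm
  · rw [hUW, ← hnorm, hac]

end QDS
end

section
/- Let ρ be a full-rank density operator on H and let A ⊆ B(H) be a unital †-closed subalgebra; set A_ρ = ρ^{1/2} A ρ^{1/2} (a ρ-distorted algebra). Then there exists a CPTP map T : B(H) → B(H) with fix(T) = A_ρ if and only if A_ρ is invariant under the modular map M_{1/2}(X) = ρ^{1/2} X ρ^{−1/2}, i.e., ρ^{1/2} A_ρ ρ^{−1/2} ⊆ A_ρ. -/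
namespace QDS

open Matrix
open scoped ComplexOrder

/-! Let `s = ρ^{1/2}`. If a CPTP map with Kraus operators `Mₖ` fixes `ρ`, then `Z ρ` is fixed
exactly when `Z` commutes with all `Mₖ` and `Mₖ†`: for a fixed `Z ρ`, the positive operators
`[Z, Mₖ] ρ [Z, Mₖ]†` have total trace zero. Since `(Z† ρ)† = (ρ Z ρ⁻¹) ρ`, this commutant is
invariant under `Z ↦ ρ Z ρ⁻¹`. That map is diagonalizable with positive eigenvalues on every
invariant subspace, so the commutant is also invariant under its square root `Z ↦ s Z s⁻¹`.

Conversely, if `A` is modular-invariant then so is its commutant, which is therefore spanned by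
modular eigenvectors. These and their suitably rescaled adjoints are Kraus operators with
`∑ Q ρ Q† = ρ K`, where `K = ∑ Q† Q` commutes with `ρ`. After a further rescaling, the extra Kraus
operator `(1 - K)^{1/2}` yields a CPTP map fixing `ρ`. It does not change the commutant of the
family, which is `A` by the double commutant theorem. -/

section DoubleCommutant

variable {𝕜 E : Type*} [RCLike 𝕜] [NormedAddCommGroup E] [InnerProductSpace 𝕜 E]
  [FiniteDimensional 𝕜 E]

theorem isSemisimpleModule_starSubalgebra (A : StarSubalgebra 𝕜 (Module.End 𝕜 E)) :
    IsSemisimpleModule A.toSubalgebra E := by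
  refine (isSemisimpleModule_iff _ _).2 ⟨fun W => ?_⟩
  let Wperp : Submodule A.toSubalgebra E :=
    { (W.restrictScalars 𝕜)ᗮ with
      smul_mem' := fun a x hx v hv => by
        have hav : inner 𝕜 (star (a : Module.End 𝕜 E) v) x = 0 :=
          hx _ (W.smul_mem ⟨_, A.star_mem' a.2⟩ hv)
        rwa [LinearMap.star_eq_adjoint, LinearMap.adjoint_inner_left] at hav }
  have hW := Submodule.isCompl_orthogonal (W.restrictScalars 𝕜)
  refine ⟨Wperp, Submodule.disjoint_def.2 fun x => Submodule.disjoint_def.1 hW.disjoint x, ?_⟩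
  rw [Submodule.codisjoint_iff_exists_add_eq]
  intro x
  exact Submodule.codisjoint_iff_exists_add_eq.1 hW.codisjoint x

theorem centralizer_centralizer_end (A : StarSubalgebra 𝕜 (Module.End 𝕜 E)) :
    (A : Set (Module.End 𝕜 E)).centralizer.centralizer = A := by
  classical
  have := isSemisimpleModule_starSubalgebra A
  refine Set.Subset.antisymm (fun z hz => ?_) Set.subset_centralizer_centralizer
  have commute_of_linear (g : Module.End A.toSubalgebra E) : z * g.restrictScalars 𝕜 = _ :=
    (hz (g.restrictScalars 𝕜) fun a ha => LinearMap.ext fun x => (g.map_smul ⟨a, ha⟩ x).symm).symm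
  let f : Module.End (Module.End A.toSubalgebra E) E :=
    { toFun := z
      map_add' := z.map_add
      map_smul' := fun g x => LinearMap.congr_fun (commute_of_linear g) x }
  let b := Module.finBasis 𝕜 E
  obtain ⟨a, ha⟩ := jacobson_density f (Finset.univ.image b)
  have hza : z = a := b.ext fun i => ha (b i) (Finset.mem_image_of_mem b (Finset.mem_univ i))
  exact hza ▸ a.2

theorem centralizer_centralizer_matrix {ι : Type*} [Fintype ι] [DecidableEq ι]
    (A : StarSubalgebra 𝕜 (Matrix ι ι 𝕜)) :
    (A : Set (Matrix ι ι 𝕜)).centralizer.centralizer = A := by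
  let e := LinearMap.toMatrixOrthonormal (EuclideanSpace.basisFun ι 𝕜)
  let A' : StarSubalgebra 𝕜 (Module.End 𝕜 (EuclideanSpace 𝕜 ι)) := A.comap e
  refine Set.Subset.antisymm (fun Z hZ => ?_) Set.subset_centralizer_centralizer
  have hZ' : e.symm Z ∈ (A' : Set _).centralizer.centralizer := fun f hf => by
    have hef : e f ∈ (A : Set (Matrix ι ι 𝕜)).centralizer := fun a ha => by
      have hea : e.symm a ∈ A' := by simpa [A'] using ha
      simpa using congrArg e (hf _ hea)
    simpa using congrArg e.symm (hZ _ hef)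
  rw [centralizer_centralizer_end] at hZ'
  simpa [A'] using hZ'

theorem starSubalgebra_centralizer_centralizer {ι : Type*} [Fintype ι] [DecidableEq ι]
    (A : StarSubalgebra 𝕜 (Matrix ι ι 𝕜)) :
    StarSubalgebra.centralizer 𝕜
      (StarSubalgebra.centralizer 𝕜 (A : Set (Matrix ι ι 𝕜)) : Set (Matrix ι ι 𝕜)) = A := by
  refine SetLike.coe_injective ?_
  rw [StarSubalgebra.coe_centralizer_centralizer, StarMemClass.star_coe_eq, Set.union_self,
    centralizer_centralizer_matrix]

theorem starSubalgebra_centralizer_span {R A : Type*} [CommSemiring R] [StarRing R] [Semiring A]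
    [StarRing A] [Algebra R A] [StarModule R A] (S : Set A) :
    StarSubalgebra.centralizer R (Submodule.span R S : Set A) =
      StarSubalgebra.centralizer R S := by
  refine le_antisymm (StarSubalgebra.centralizer_le _ _ _ Submodule.subset_span) fun Z hZ => ?_
  rw [StarSubalgebra.mem_centralizer_iff] at hZ ⊢
  intro g hg
  induction hg using Submodule.span_induction with
  | mem x hx => exact hZ x hx
  | zero => simp
  | add x y _ _ hx hy => simp only [star_add, add_mul, mul_add, hx, hy, and_self]
  | smul a x _ hx => simp only [star_smul, smul_mul_assoc, mul_smul_comm, hx, and_self]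

end DoubleCommutant

section Positivity

variable {ι : Type*} [Fintype ι]

open scoped MatrixOrder Matrix.Norms.L2Operator in
theorem trace_mul_conj_pos {P α X : Matrix ι ι ℂ} (hP : P.PosDef) (hα : α.PosDef)
    (hX : X ≠ 0) : 0 < (P * (X * α * Xᴴ)).trace := by
  classical
  obtain ⟨S, hS, rfl⟩ :=
    CStarAlgebra.isStrictlyPositive_iff_eq_star_mul_self.1 hP.isStrictlyPositive
  have htrace : (star S * S * (X * α * Xᴴ)).trace = (S * X * α * (S * X)ᴴ).trace := by
    rw [mul_assoc, trace_mul_comm, star_eq_conjTranspose, conjTranspose_mul]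
    simp only [mul_assoc]
  have hSX : S * X ≠ 0 := fun h => hX (hS.mul_right_eq_zero.1 h)
  rw [htrace]
  refine (hα.posSemidef.mul_mul_conjTranspose_same _).trace_nonneg.lt_of_ne' ?_
  let _ := α.toMatrixNormedAddCommGroup hα
  let _ := α.toMatrixInnerProductSpace hα.posSemidef
  exact inner_self_ne_zero (𝕜 := ℂ).2 hSX

theorem posDef_mul_self {s : Matrix ι ι ℂ} (hs : s.PosDef) : (s * s).PosDef := by
  classical
  nth_rw 1 [← hs.isHermitian.eq]
  exact PosDef.conjTranspose_mul_self s (mulVec_injective_of_isUnit hs.isUnit)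

open scoped MatrixOrder Matrix.Norms.L2Operator in
theorem posDef_msqrt {ρ : Matrix ι ι ℂ} (hρ : ρ.PosDef) : (msqrt ρ).PosDef := by
  classical
  have hsqrt : ∃ B : Matrix ι ι ℂ, B.PosSemidef ∧ B * B = ρ :=
    ⟨CFC.sqrt ρ, (CFC.sqrt_nonneg ρ).posSemidef,
      CFC.sqrt_mul_sqrt_self ρ hρ.posSemidef.nonneg⟩
  obtain ⟨hs, hss⟩ : (msqrt ρ).PosSemidef ∧ msqrt ρ * msqrt ρ = ρ := by
    rw [msqrt, dif_pos hsqrt]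
    exact hsqrt.choose_spec
  exact hs.posDef_iff_isUnit.2 (isUnit_of_mul_isUnit_left (hss.symm ▸ hρ.isUnit))

end Positivity

section Kraus

variable {ι κ : Type*} [Fintype ι] [Fintype κ]

/-- The completely positive map `X ↦ ∑ₖ Nₖ X Nₖ†` with Kraus operators `N`. Its Hilbert–Schmidt
adjoint is `krausMap (star N)`, so trace preservation reads `krausMap (star N) 1 = 1`. -/
noncomputable def krausMap (N : κ → Matrix ι ι ℂ) : Matrix ι ι ℂ →ₗ[ℂ] Matrix ι ι ℂ :=
  ∑ k, LinearMap.mulLeftRight ℂ (N k, (N k)ᴴ)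

theorem krausMap_apply (N : κ → Matrix ι ι ℂ) (X : Matrix ι ι ℂ) :
    krausMap N X = ∑ k, N k * X * (N k)ᴴ := by
  simp only [krausMap, LinearMap.sum_apply, LinearMap.mulLeftRight_apply]

theorem krausMap_star_apply (N : κ → Matrix ι ι ℂ) (X : Matrix ι ι ℂ) :
    krausMap (star N) X = ∑ k, (N k)ᴴ * X * N k := by
  simp only [krausMap_apply, Pi.star_apply, star_eq_conjTranspose, conjTranspose_conjTranspose]

theorem krausMap_conjTranspose (N : κ → Matrix ι ι ℂ) (X : Matrix ι ι ℂ) :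
    krausMap N Xᴴ = (krausMap N X)ᴴ := by
  simp only [krausMap_apply, conjTranspose_sum, conjTranspose_mul, conjTranspose_conjTranspose,
    mul_assoc]

theorem trace_mul_krausMap (N : κ → Matrix ι ι ℂ) (P X : Matrix ι ι ℂ) :
    (P * krausMap N X).trace = (krausMap (star N) P * X).trace := by
  simp only [krausMap_star_apply, krausMap_apply N, Finset.mul_sum, Finset.sum_mul, trace_sum]
  refine Finset.sum_congr rfl fun k _ => ?_
  rw [← mul_assoc, trace_mul_comm, ← mul_assoc, ← mul_assoc]

theorem sum_commutator_conj_eq (N : κ → Matrix ι ι ℂ) (Z α : Matrix ι ι ℂ) :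
    ∑ k, (Z * N k - N k * Z) * α * (Z * N k - N k * Z)ᴴ =
      Z * krausMap N α * Zᴴ - Z * krausMap N (α * Zᴴ) - krausMap N (Z * α) * Zᴴ +
        krausMap N (Z * α * Zᴴ) := by
  simp only [krausMap_apply, Finset.mul_sum, Finset.sum_mul, ← Finset.sum_sub_distrib,
    ← Finset.sum_add_distrib, conjTranspose_sub, conjTranspose_mul]
  refine Finset.sum_congr rfl fun k _ => ?_
  noncomm_ring

theorem commute_of_krausMap_mul_eq {N : κ → Matrix ι ι ℂ}
    {P α Z : Matrix ι ι ℂ} (hP : P.PosDef) (hα : α.PosDef) (hNP : krausMap (star N) P = P)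
    (hNα : krausMap N α = α) (hNZ : krausMap N (Z * α) = Z * α) (k : κ) : Commute Z (N k) := by
  have hNZ' : krausMap N (α * Zᴴ) = α * Zᴴ := by
    have h := krausMap_conjTranspose N (Z * α)
    rwa [hNZ, conjTranspose_mul, hα.isHermitian] at h
  have hsum : ∑ k, (P * ((Z * N k - N k * Z) * α * (Z * N k - N k * Z)ᴴ)).trace = 0 := by
    rw [← trace_sum, ← Finset.mul_sum, sum_commutator_conj_eq, hNα, hNZ, hNZ', mul_add,
      trace_add, trace_mul_krausMap, hNP, ← trace_add, ← mul_add]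
    simp only [mul_assoc, sub_self, zero_sub, neg_add_cancel, mul_zero, trace_zero]
  have hnonneg (k : κ) : 0 ≤ (P * ((Z * N k - N k * Z) * α * (Z * N k - N k * Z)ᴴ)).trace := by
    by_cases h : Z * N k - N k * Z = 0
    · simp only [h, zero_mul, mul_zero, trace_zero, le_refl]
    · exact (trace_mul_conj_pos hP hα h).le
  have hzero := (Finset.sum_eq_zero_iff_of_nonneg fun k _ => hnonneg k).1 hsum k (Finset.mem_univ k)
  exact sub_eq_zero.1 (not_ne_iff.1 fun h => (trace_mul_conj_pos hP hα h).ne' hzero)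

theorem krausMap_mul_of_commute {N : κ → Matrix ι ι ℂ} {Z : Matrix ι ι ℂ}
    (h : ∀ k, Commute Z (N k)) (X : Matrix ι ι ℂ) : krausMap N (Z * X) = Z * krausMap N X := by
  simp only [krausMap_apply, Finset.mul_sum, ← mul_assoc, (h _).eq]

theorem krausMap_star_mul_of_commute {N : κ → Matrix ι ι ℂ} {Z : Matrix ι ι ℂ}
    (h : ∀ k, Commute Z (N k)) (X : Matrix ι ι ℂ) :
    krausMap (star N) (X * Z) = krausMap (star N) X * Z := by
  simp only [krausMap_star_apply, Finset.sum_mul, mul_assoc, (h _).eq]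

variable [DecidableEq ι]

theorem commute_krausMap_star_one {N : κ → Matrix ι ι ℂ} {Z : Matrix ι ι ℂ}
    (hZ : Z ∈ StarSubalgebra.centralizer ℂ (Set.range N)) : Commute (krausMap (star N) 1) Z := by
  rw [StarSubalgebra.mem_centralizer_iff, Set.forall_mem_range] at hZ
  calc krausMap (star N) 1 * Z
      = krausMap (star N) (Z * 1) := by
        rw [← krausMap_star_mul_of_commute (fun k => (hZ k).1.symm), one_mul, mul_one]
    _ = Z * krausMap (star N) 1 := krausMap_mul_of_commute (fun k => (hZ k).2.symm) 1

theorem krausMap_mul_eq_iff {M : κ → Matrix ι ι ℂ} {ρ : Matrix ι ι ℂ}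
    (hM : krausMap (star M) 1 = 1) (hρ : ρ.PosDef) (hMρ : krausMap M ρ = ρ) {Z : Matrix ι ι ℂ} :
    krausMap M (Z * ρ) = Z * ρ ↔ Z ∈ StarSubalgebra.centralizer ℂ (Set.range M) := by
  rw [StarSubalgebra.mem_centralizer_iff, Set.forall_mem_range]
  refine ⟨fun hZ => ?_, fun hZ => ?_⟩
  · have hcomm := commute_of_krausMap_mul_eq PosDef.one hρ hM hMρ hZ
    have hdual : krausMap (star M) (Z * 1) = Z * 1 := by
      rw [mul_one, ← one_mul Z, krausMap_star_mul_of_commute hcomm, hM]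
    have hcomm_star := commute_of_krausMap_mul_eq hρ PosDef.one ((star_star M).symm ▸ hMρ) hM hdual
    exact fun k => ⟨(hcomm k).eq.symm, (hcomm_star k).eq.symm⟩
  · rw [krausMap_mul_of_commute fun k => (hZ k).1.symm, hMρ]

theorem isCPTP_krausMap {N : κ → Matrix ι ι ℂ} (hN : krausMap (star N) 1 = 1) :
    IsCPTP (krausMap N) := by
  let e := Fintype.equivFin κ
  refine ⟨_, N ∘ e.symm, fun X => ?_, ?_⟩
  · rw [krausMap_apply, ← e.symm.sum_comp]
    rfl
  · simp_rw [krausMap_star_apply, mul_one] at hN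
    rw [← hN, ← e.symm.sum_comp]
    rfl

theorem IsCPTP.exists_eq_krausMap {T : Matrix ι ι ℂ →ₗ[ℂ] Matrix ι ι ℂ} (hT : IsCPTP T) :
    ∃ (m : ℕ) (M : Fin m → Matrix ι ι ℂ), T = krausMap M ∧ krausMap (star M) 1 = 1 := by
  obtain ⟨m, M, hTM, hM⟩ := hT
  refine ⟨m, M, LinearMap.ext fun X => (hTM X).trans (krausMap_apply M X).symm, ?_⟩
  simpa only [krausMap_star_apply, mul_one] using hM

end Kraus

section ModularMap

variable {ι : Type*} [Fintype ι] [DecidableEq ι] {s X Z : Matrix ι ι ℂ}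

/-- The modular map `X ↦ s X s⁻¹`; for `s = ρ^{1/2}` it is `M_{1/2}`. -/
noncomputable def modularMap (s : Matrix ι ι ℂ) : Matrix ι ι ℂ →ₗ[ℂ] Matrix ι ι ℂ :=
  LinearMap.mulLeftRight ℂ (s, s⁻¹)

theorem modularMap_apply (s X : Matrix ι ι ℂ) : modularMap s X = s * X * s⁻¹ :=
  LinearMap.mulLeftRight_apply ..

theorem modularMap_mul_self (s X : Matrix ι ι ℂ) :
    modularMap (s * s) X = modularMap s (modularMap s X) := by
  simp only [modularMap_apply, Matrix.mul_inv_rev, mul_assoc]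

theorem modularMap_eq_iff (hs : IsUnit s) {Y : Matrix ι ι ℂ} :
    modularMap s X = Y ↔ s * X = Y * s := by
  have := hs.invertible
  rw [modularMap_apply, ← Matrix.mul_inv_eq_iff_eq_mul_of_invertible]

theorem modularMap_mul_right (hs : IsUnit s) (X : Matrix ι ι ℂ) : modularMap s X * s = s * X :=
  ((modularMap_eq_iff hs).1 rfl).symm

theorem pos_of_modularMap_eq_smul (hs : s.PosDef) (hX : X ≠ 0) {c : ℝ}
    (h : modularMap s X = (c : ℂ) • X) : 0 < c := by
  have hsX : s * X = (c : ℂ) • X * s := (modularMap_eq_iff hs.isUnit).1 h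
  have htrace : (s * (X * 1 * Xᴴ)).trace = (c : ℂ) * (1 * (X * s * Xᴴ)).trace := by
    rw [mul_one, one_mul, ← mul_assoc, hsX, smul_mul_assoc, smul_mul_assoc, trace_smul,
      smul_eq_mul]
  have hpos := trace_mul_conj_pos hs PosDef.one hX
  rw [htrace] at hpos
  exact_mod_cast pos_of_mul_pos_left hpos (trace_mul_conj_pos PosDef.one hs hX).le

theorem modularMap_eq_sqrt_smul (hs : s.PosDef) {c : ℝ} (hc : 0 ≤ c)
    (h : modularMap (s * s) X = (c : ℂ) • X) : modularMap s X = (√c : ℂ) • X := by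
  have hY : modularMap s (modularMap s X - (√c : ℂ) • X) =
      ((-√c : ℝ) : ℂ) • (modularMap s X - (√c : ℂ) • X) := by
    have hsq : (c : ℂ) = √c * √c := by exact_mod_cast (Real.mul_self_sqrt hc).symm
    rw [map_sub, ← modularMap_mul_self, h, map_smul, hsq, Complex.ofReal_neg]
    module
  refine sub_eq_zero.1 (not_ne_iff.1 fun hne => ?_)
  exact (pos_of_modularMap_eq_smul hs hne hY).not_ge (neg_nonpos.2 (Real.sqrt_nonneg c))

theorem exists_span_eq_modularMap_eigenvectors (hs : s.PosDef)
    {V : Submodule ℂ (Matrix ι ι ℂ)} (hV : ∀ X ∈ V, modularMap s X ∈ V) :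
    ∃ (n : ℕ) (M : Fin n → Matrix ι ι ℂ) (c : Fin n → ℝ), Submodule.span ℂ (Set.range M) = V ∧
      ∀ k, 0 < c k ∧ modularMap s (M k) = (c k : ℂ) • M k := by
  let _ := toMatrixNormedAddCommGroup (1 : Matrix ι ι ℂ) PosDef.one
  let _ := toMatrixInnerProductSpace (1 : Matrix ι ι ℂ) PosSemidef.one
  have hsymm : (modularMap s).IsSymmetric := fun X Y => by
    change (Y * 1 * (modularMap s X)ᴴ).trace = (modularMap s Y * 1 * Xᴴ).trace
    simp only [modularMap_apply, conjTranspose_mul, conjTranspose_nonsing_inv, hs.isHermitian.eq,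
      mul_one, mul_assoc, trace_mul_comm s]
  have hsymmV := hsymm.restrict_invariant hV
  let b := hsymmV.eigenvectorBasis rfl
  have hb (k) : modularMap s (b k) = (hsymmV.eigenvalues rfl k : ℂ) • (b k : Matrix ι ι ℂ) :=
    congrArg Subtype.val (hsymmV.apply_eigenvectorBasis rfl k)
  refine ⟨_, fun k => b k, hsymmV.eigenvalues rfl, ?_, fun k => ⟨?_, hb k⟩⟩
  · calc Submodule.span ℂ (Set.range (V.subtype ∘ b.toBasis))
        = (Submodule.span ℂ (Set.range b.toBasis)).map V.subtype := by
          rw [Set.range_comp, Submodule.map_span]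
      _ = V := by rw [b.toBasis.span_eq, Submodule.map_subtype_top]
  · exact pos_of_modularMap_eq_smul hs (Subtype.coe_ne_coe.2 (b.toBasis.ne_zero k)) (hb k)

theorem modularMap_mem_of_modularMap_mul_self_mem (hs : s.PosDef)
    {V : Submodule ℂ (Matrix ι ι ℂ)} (hV : ∀ X ∈ V, modularMap (s * s) X ∈ V) (hX : X ∈ V) :
    modularMap s X ∈ V := by
  obtain ⟨n, M, c, rfl, hM⟩ := exists_span_eq_modularMap_eigenvectors (posDef_mul_self hs) hV
  refine (Submodule.span_le (p := (Submodule.span ℂ (Set.range M)).comap (modularMap s))).2 ?_ hX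
  rintro - ⟨k, rfl⟩
  rw [SetLike.mem_coe, Submodule.mem_comap, modularMap_eq_sqrt_smul hs (hM k).1.le (hM k).2]
  exact Submodule.smul_mem _ _ (Submodule.subset_span ⟨k, rfl⟩)

theorem modularMap_mul (hs : IsUnit s) (X Y : Matrix ι ι ℂ) :
    modularMap s (X * Y) = modularMap s X * modularMap s Y := by
  rw [modularMap_eq_iff hs, mul_assoc _ _ s, modularMap_mul_right hs, ← mul_assoc, ← mul_assoc,
    modularMap_mul_right hs]

theorem modularMap_modularMap_inv (hs : IsUnit s) (X : Matrix ι ι ℂ) :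
    modularMap s (modularMap s⁻¹ X) = X := by
  have := hs.invertible
  simp [modularMap_apply, mul_assoc]

variable {A : StarSubalgebra ℂ (Matrix ι ι ℂ)}

theorem modularMap_inv_mem (hs : s.PosDef) (hA : ∀ X ∈ A, modularMap s X ∈ A) (hX : X ∈ A) :
    modularMap s⁻¹ X ∈ A := by
  have := hs.isUnit.invertible
  have hstar : modularMap s⁻¹ X = star (modularMap s (star X)) := by
    simp [modularMap_apply, star_eq_conjTranspose, conjTranspose_nonsing_inv, hs.isHermitian.eq,
      mul_assoc]
  exact hstar ▸ star_mem (hA _ (star_mem hX))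

theorem modularMap_mem_centralizer (hs : s.PosDef) (hA : ∀ X ∈ A, modularMap s X ∈ A)
    (hZ : Z ∈ StarSubalgebra.centralizer ℂ (A : Set (Matrix ι ι ℂ))) :
    modularMap s Z ∈ StarSubalgebra.centralizer ℂ (A : Set (Matrix ι ι ℂ)) := by
  rw [StarSubalgebra.mem_centralizer_iff] at hZ ⊢
  have hcomm (X) (hX : X ∈ A) : X * modularMap s Z = modularMap s Z * X := by
    rw [← modularMap_modularMap_inv hs.isUnit X, ← modularMap_mul hs.isUnit,
      ← modularMap_mul hs.isUnit, (hZ _ (modularMap_inv_mem hs hA hX)).1]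
  exact fun X hX => ⟨hcomm X hX, hcomm _ (star_mem hX)⟩

end ModularMap

section FixedPoints

variable {ι κ : Type*} [Fintype ι] [DecidableEq ι] [Fintype κ]

theorem modularMap_mem_centralizer_range {M : κ → Matrix ι ι ℂ} {ρ Z : Matrix ι ι ℂ}
    (hM : krausMap (star M) 1 = 1) (hρ : ρ.PosDef) (hMρ : krausMap M ρ = ρ)
    (hZ : Z ∈ StarSubalgebra.centralizer ℂ (Set.range M)) :
    modularMap ρ Z ∈ StarSubalgebra.centralizer ℂ (Set.range M) := by
  have hZstar : krausMap M (Zᴴ * ρ) = Zᴴ * ρ := (krausMap_mul_eq_iff hM hρ hMρ).2 (star_mem hZ)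
  have hmul : modularMap ρ Z * ρ = (Zᴴ * ρ)ᴴ := by
    rw [modularMap_mul_right hρ.isUnit, conjTranspose_mul, conjTranspose_conjTranspose,
      hρ.isHermitian]
  rw [← krausMap_mul_eq_iff hM hρ hMρ, hmul, krausMap_conjTranspose, hZstar]

theorem IsCPTP.modularMap_mem_fixSet {T : Matrix ι ι ℂ →ₗ[ℂ] Matrix ι ι ℂ} (hT : IsCPTP T)
    {s Y : Matrix ι ι ℂ} (hs : s.PosDef) (hTs : s * s ∈ fixSet T) (hY : Y ∈ fixSet T) :
    modularMap s Y ∈ fixSet T := by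
  obtain ⟨m, M, rfl, hM⟩ := hT.exists_eq_krausMap
  have hss := posDef_mul_self hs
  obtain ⟨Z, rfl⟩ := (IsUnit.isUnit_iff_mulRight_bijective.1 hss.isUnit).surjective Y
  let C := StarSubalgebra.centralizer ℂ (Set.range M)
  have hZ : Z ∈ C := (krausMap_mul_eq_iff hM hss hTs).1 hY
  have hsZ : modularMap s Z ∈ C :=
    modularMap_mem_of_modularMap_mul_self_mem (V := C.toSubalgebra.toSubmodule) hs
      (fun X hX => modularMap_mem_centralizer_range hM hss hTs hX) hZ
  have hfix := (krausMap_mul_eq_iff hM hss hTs).2 hsZ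
  have hmul : modularMap s (Z * (s * s)) = modularMap s Z * (s * s) := by
    rw [modularMap_eq_iff hs.isUnit, ← mul_assoc, ← modularMap_mul_right hs.isUnit]
    simp only [mul_assoc]
  rwa [← hmul] at hfix

end FixedPoints

section Construction

variable {ι κ : Type*} [Fintype ι] [DecidableEq ι]

/-- The family `{Mₖ} ∪ {cₖ^{-1/2} Mₖ†}`. When `ρ Mₖ = cₖ Mₖ ρ`, the weights make
`∑ Q ρ Q† = ρ ∑ Q† Q`. -/
noncomputable def balancedFamily (M : κ → Matrix ι ι ℂ) (c : κ → ℝ) : κ ⊕ κ → Matrix ι ι ℂ :=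
  Sum.elim M fun k => (√(c k))⁻¹ • (M k)ᴴ

theorem centralizer_range_balancedFamily {M : κ → Matrix ι ι ℂ} {c : κ → ℝ} (hc : ∀ k, 0 < c k) :
    StarSubalgebra.centralizer ℂ (Set.range (balancedFamily M c)) =
      StarSubalgebra.centralizer ℂ (Set.range M) := by
  have hne (k) : (√(c k))⁻¹ ≠ 0 := (inv_pos.2 (Real.sqrt_pos.2 (hc k))).ne'
  refine SetLike.ext fun Z => ?_
  simp only [StarSubalgebra.mem_centralizer_iff, Set.forall_mem_range, Sum.forall, balancedFamily,
    Sum.elim_inl, Sum.elim_inr, star_smul, star_trivial, smul_mul_assoc, mul_smul_comm,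
    smul_right_inj (hne _), ← star_eq_conjTranspose, star_star]
  exact and_iff_left_of_imp fun h k => (h k).symm

variable [Fintype κ]

theorem krausMap_balancedFamily {M : κ → Matrix ι ι ℂ} {c : κ → ℝ} {ρ : Matrix ι ι ℂ}
    (hρ : ρ.PosDef) (hc : ∀ k, 0 < c k) (hM : ∀ k, modularMap ρ (M k) = (c k : ℂ) • M k) :
    krausMap (balancedFamily M c) ρ = ρ * krausMap (star (balancedFamily M c)) 1 := by
  have hM' (k) : ρ * M k = c k • (M k * ρ) := by
    rw [(modularMap_eq_iff hρ.isUnit).1 (hM k), Complex.coe_smul, smul_mul_assoc]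
  have hMstar (k) : (M k)ᴴ * ρ = c k • (ρ * (M k)ᴴ) := by
    simpa [hρ.isHermitian.eq] using congrArg conjTranspose (hM' k)
  have hsq (k) : (√(c k))⁻¹ * (√(c k))⁻¹ = (c k)⁻¹ := by
    rw [← mul_inv, Real.mul_self_sqrt (hc k).le]
  calc krausMap (balancedFamily M c) ρ
      = ∑ k, M k * ρ * (M k)ᴴ + ∑ k, (c k)⁻¹ • ((M k)ᴴ * ρ * M k) := by
        simp [krausMap_apply, balancedFamily, smul_smul, hsq]
    _ = ∑ k, (c k)⁻¹ • (ρ * M k * (M k)ᴴ) + ∑ k, ρ * (M k)ᴴ * M k := by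
        simp [hM', hMstar, smul_smul, (hc _).ne']
    _ = ρ * krausMap (star (balancedFamily M c)) 1 := by
        simp [krausMap_star_apply, balancedFamily, smul_smul, hsq, mul_add, Finset.mul_sum,
          mul_assoc, add_comm]

open scoped MatrixOrder Matrix.Norms.L2Operator in
theorem exists_isHermitian_mul_self_eq_one_sub_smul {K : Matrix ι ι ℂ} (hK : K.IsHermitian) :
    ∃ (t : ℝ) (G : Matrix ι ι ℂ), 0 < t ∧ G.IsHermitian ∧ G * G = 1 - t ^ 2 • K ∧
      ∀ X, Commute K X → Commute G X := by
  have hc : 0 < ‖K‖ + 1 := by positivity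
  have hKc : K ≤ algebraMap ℝ _ (‖K‖ + 1) := by
    have h := hK.isSelfAdjoint.le_algebraMap_norm_self
    exact h.trans (algebraMap_mono _ (by linarith))
  have hdefect : 0 ≤ 1 - √(‖K‖ + 1)⁻¹ ^ 2 • K := by
    rw [sub_nonneg, Real.sq_sqrt (by positivity), inv_smul_le_iff_of_pos hc,
      ← Algebra.algebraMap_eq_smul_one]
    exact hKc
  refine ⟨_, CFC.sqrt (1 - √(‖K‖ + 1)⁻¹ ^ 2 • K), by positivity,
    (CFC.sqrt_nonneg _).posSemidef.isHermitian, CFC.sqrt_mul_sqrt_self _ hdefect, fun X hX => ?_⟩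
  rw [CFC.sqrt_eq_cfc]
  exact ((Commute.one_left X).sub_left (hX.smul_left _)).cfc_nnreal _

theorem exists_krausMap_of_krausMap_eq_mul (Q : κ → Matrix ι ι ℂ) {ρ : Matrix ι ι ℂ}
    (hρ : ρ.IsHermitian) (hQ : krausMap Q ρ = ρ * krausMap (star Q) 1) :
    ∃ N : Option κ → Matrix ι ι ℂ, krausMap (star N) 1 = 1 ∧ krausMap N ρ = ρ ∧
      StarSubalgebra.centralizer ℂ (Set.range N) = StarSubalgebra.centralizer ℂ (Set.range Q) := by
  set K := krausMap (star Q) 1 with hKdef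
  have hK : K.IsHermitian := by rw [IsHermitian, hKdef, ← krausMap_conjTranspose, conjTranspose_one]
  have hKρ : Commute K ρ := by
    have h := krausMap_conjTranspose Q ρ
    rw [hρ.eq, hQ, conjTranspose_mul, hρ.eq, hK.eq] at h
    exact h.symm
  obtain ⟨t, G, ht, hG, hGG, hGcomm⟩ := exists_isHermitian_mul_self_eq_one_sub_smul hK
  refine ⟨fun o => o.elim G (t • Q), ?_, ?_, SetLike.ext fun Z => ?_⟩
  · calc _ = G * G + t ^ 2 • K := by
          simp [hKdef, krausMap_star_apply, Fintype.sum_option, hG.eq, Finset.smul_sum, smul_smul,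
            sq]
      _ = 1 := by rw [hGG, sub_add_cancel]
  · calc _ = G * ρ * G + t ^ 2 • krausMap Q ρ := by
          simp [krausMap_apply, Fintype.sum_option, hG.eq, Finset.smul_sum, smul_smul, sq]
      _ = ρ * (G * G + t ^ 2 • K) := by
          rw [(hGcomm ρ hKρ).eq, hQ, mul_add, mul_assoc, mul_smul_comm]
      _ = ρ := by rw [hGG, sub_add_cancel, mul_one]
  · have hG_of_Q (hZ : Z ∈ StarSubalgebra.centralizer ℂ (Set.range Q)) : Commute G Z :=
      hGcomm Z (commute_krausMap_star_one hZ)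
    simp only [StarSubalgebra.mem_centralizer_iff, Set.forall_mem_range, Option.forall,
      Option.elim, Pi.smul_apply, star_eq_conjTranspose, hG.eq, conjTranspose_smul, star_trivial,
      smul_mul_assoc, mul_smul_comm, smul_right_inj ht.ne', and_self,
      and_iff_right_iff_imp] at hG_of_Q ⊢
    exact hG_of_Q

theorem exists_isCPTP_map_mul_eq_iff_mem {s : Matrix ι ι ℂ}
    {A : StarSubalgebra ℂ (Matrix ι ι ℂ)} (hs : s.PosDef) (hA : ∀ X ∈ A, modularMap s X ∈ A) :
    ∃ T : Matrix ι ι ℂ →ₗ[ℂ] Matrix ι ι ℂ, IsCPTP T ∧ ∀ Z, T (Z * s) = Z * s ↔ Z ∈ A := by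
  let B := StarSubalgebra.centralizer ℂ (A : Set (Matrix ι ι ℂ))
  obtain ⟨n, M, c, hspan, hM⟩ := exists_span_eq_modularMap_eigenvectors
    (V := B.toSubalgebra.toSubmodule) hs fun X hX => modularMap_mem_centralizer hs hA hX
  obtain ⟨N, hN, hNs, hNM⟩ := exists_krausMap_of_krausMap_eq_mul _ hs.isHermitian
    (krausMap_balancedFamily hs (fun k => (hM k).1) fun k => (hM k).2)
  refine ⟨krausMap N, isCPTP_krausMap hN, fun Z => ?_⟩
  rw [krausMap_mul_eq_iff hN hs hNs, hNM, centralizer_range_balancedFamily fun k => (hM k).1]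
  have hMB : (Submodule.span ℂ (Set.range M) : Set (Matrix ι ι ℂ)) = B := congrArg _ hspan
  rw [← starSubalgebra_centralizer_span, hMB, starSubalgebra_centralizer_centralizer]

end Construction

section DistortedAlgebra

variable {ι : Type*} [Fintype ι] [DecidableEq ι] {s X Z : Matrix ι ι ℂ}

/-- The distortion `s A s` of a set of operators; for `s = ρ^{1/2}` and an algebra `A` it is the
`ρ`-distorted algebra `A_ρ`. -/
def distortedAlgebra (s : Matrix ι ι ℂ) (A : Set (Matrix ι ι ℂ)) : Set (Matrix ι ι ℂ) :=
  {Y | ∃ X ∈ A, Y = s * X * s}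

theorem mul_mul_mem_distortedAlgebra_iff {A : Set (Matrix ι ι ℂ)} (hs : IsUnit s) :
    s * X * s ∈ distortedAlgebra s A ↔ X ∈ A := by
  refine ⟨?_, fun hX => ⟨X, hX, rfl⟩⟩
  rintro ⟨X', hX', h⟩
  exact hs.mul_left_cancel (hs.mul_right_cancel h) ▸ hX'

theorem modularMap_mul_mul (hs : IsUnit s) (X : Matrix ι ι ℂ) :
    modularMap s (s * X * s) = s * modularMap s X * s := by
  rw [modularMap_eq_iff hs, mul_assoc s (modularMap s X), modularMap_mul_right hs]
  simp only [mul_assoc]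

theorem modularMap_mem_of_modularMap_mem_distortedAlgebra {A : Set (Matrix ι ι ℂ)} (hs : IsUnit s)
    (hA : ∀ Y ∈ distortedAlgebra s A, modularMap s Y ∈ distortedAlgebra s A) (hX : X ∈ A) :
    modularMap s X ∈ A := by
  rw [← mul_mul_mem_distortedAlgebra_iff hs, ← modularMap_mul_mul hs]
  exact hA _ ⟨X, hX, rfl⟩

variable {A : StarSubalgebra ℂ (Matrix ι ι ℂ)}

theorem mul_mul_self_mem_distortedAlgebra_iff (hs : s.PosDef)
    (hA : ∀ X ∈ A, modularMap s X ∈ A) : Z * (s * s) ∈ distortedAlgebra s A ↔ Z ∈ A := by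
  have hZ : modularMap s (modularMap s⁻¹ Z) = Z := modularMap_modularMap_inv hs.isUnit Z
  have hmul : Z * (s * s) = s * modularMap s⁻¹ Z * s := by
    rw [← modularMap_mul_right hs.isUnit (modularMap s⁻¹ Z), hZ, mul_assoc]
  rw [hmul, mul_mul_mem_distortedAlgebra_iff hs.isUnit]
  exact ⟨fun h => hZ ▸ hA _ h, modularMap_inv_mem hs hA⟩

theorem exists_isCPTP_fixSet_eq_distortedAlgebra (hs : s.PosDef)
    (hA : ∀ X ∈ A, modularMap s X ∈ A) :
    ∃ T : Matrix ι ι ℂ →ₗ[ℂ] Matrix ι ι ℂ, IsCPTP T ∧ fixSet T = distortedAlgebra s A := by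
  have hss := posDef_mul_self hs
  obtain ⟨T, hT, hTA⟩ := exists_isCPTP_map_mul_eq_iff_mem hss fun X hX =>
    modularMap_mul_self s X ▸ hA _ (hA X hX)
  refine ⟨T, hT, Set.ext fun Y => ?_⟩
  obtain ⟨Z, rfl⟩ := (IsUnit.isUnit_iff_mulRight_bijective.1 hss.isUnit).surjective Y
  exact (hTA Z).trans (mul_mul_self_mem_distortedAlgebra_iff hs hA).symm

end DistortedAlgebra

/-! ### Statement 1 -/

theorem stmt1
    {ι : Type*} [Fintype ι] [DecidableEq ι]
    (ρ : Matrix ι ι ℂ) (hρ : ρ.PosDef) (hρtr : ρ.trace = 1)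
    (A : Subalgebra ℂ (Matrix ι ι ℂ)) (hstar : ∀ X ∈ A, Xᴴ ∈ A) :
    (∃ T : Matrix ι ι ℂ →ₗ[ℂ] Matrix ι ι ℂ, IsCPTP T ∧
        fixSet T = {Y | ∃ X ∈ A, Y = msqrt ρ * X * msqrt ρ}) ↔
      ∀ Y ∈ {Y : Matrix ι ι ℂ | ∃ X ∈ A, Y = msqrt ρ * X * msqrt ρ},
        msqrt ρ * Y * (msqrt ρ)⁻¹ ∈
          {Y : Matrix ι ι ℂ | ∃ X ∈ A, Y = msqrt ρ * X * msqrt ρ} := by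
  have hs := posDef_msqrt hρ
  generalize msqrt ρ = s at *
  let A' : StarSubalgebra ℂ (Matrix ι ι ℂ) := { A with star_mem' := fun {X} => hstar X }
  constructor
  · rintro ⟨T, hT, hfix⟩ Y hY
    have hss : s * s ∈ fixSet T := hfix ▸ ⟨1, A.one_mem, by rw [mul_one]⟩
    rw [← modularMap_apply]
    exact hfix ▸ hT.modularMap_mem_fixSet hs hss (hfix ▸ hY)
  · intro hA
    refine exists_isCPTP_fixSet_eq_distortedAlgebra (A := A') hs fun X hX =>
      modularMap_mem_of_modularMap_mem_distortedAlgebra hs.isUnit (fun Y hY => ?_) hX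
    exact modularMap_apply s Y ▸ hA Y hY

end QDS
end
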